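/- arXiv:math/0412222 — 3 statements merged into one kernel-verified Lean document; each statement's English description precedes it below -/
import Mathlib

section
/- For every positive integer n there exists a bijection σ ↦ σ^⊥ from I_n to I_n such that for every σ ∈ I_n, Des(σ^⊥) = {1,…,n−1} \ Des(σ); equivalently, d_i(σ^⊥) = n − i − d_i(σ) for all 1 ≤ i < n. Consequently the multivariate polynomial 𝒢_n(x_1,…,x_{n−1}) = Σ_{σ∈I_n} x_1^{d_1(σ)} x_2^{d_2(σ)} ⋯ x_{n−1}^{d_{n−1}(σ)} satisfies 𝒢_n(x_1,…,x_{n−1}) = x_1^{n−1} x_2^{n−2} ⋯ x_{n−1} · 𝒢_n(x_1^{−1},…,x_{n−1}^{−1}). -/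
noncomputable section
open Finset

/-- The set of involutions in the symmetric group on `Fin n`. -/
def Invols (n : ℕ) : Finset (Equiv.Perm (Fin n)) :=
  Finset.univ.filter (fun σ => σ * σ = 1)

/-- `σ` viewed as a function on one-based positions `1,…,n` (via zero-based `Fin n`),
returning one-based values; positions outside `[0,n)` are fixed. -/
def permFun (n : ℕ) (σ : Equiv.Perm (Fin n)) (i : ℕ) : ℕ :=
  if h : i < n then (σ ⟨i, h⟩ : ℕ) else i

/-- The descent set of `σ`, as a subset of `{1,…,n-1}` (one-based positions):
`i` is a descent iff `σ_i > σ_{i+1}`. -/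
def DesSet (n : ℕ) (σ : Equiv.Perm (Fin n)) : Finset ℕ :=
  (Finset.Icc 1 (n - 1)).filter (fun i => permFun n σ i < permFun n σ (i - 1))

/-- The partial descent count `d_i(σ) = |{j ≥ i : j ∈ Des(σ)}|`. -/
def dpart (n : ℕ) (i : ℕ) (σ : Equiv.Perm (Fin n)) : ℕ :=
  ((DesSet n σ).filter (fun j => i ≤ j)).card

/-- Sorted rearrangements inside the blocks of `b` are unique. -/
lemma block_unique {n : ℕ} (b : Fin n → ℕ) (hb : Monotone b) (f : Fin n → ℤ)
    (h : Equiv.Perm (Fin n)) (hh : ∀ i, b (h i) = b i)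
    (h1 : ∀ i j, i < j → b i = b j → f i ≤ f j)
    (h2 : ∀ i j, i < j → b i = b j → f (h i) ≤ f (h j)) : ∀ i, f (h i) = f i := by
  let F : Fin n → ℕ ×ₗ ℤ := fun i => toLex (b i, f i)
  have key : ∀ g : Fin n → ℤ, (∀ i j, i < j → b i = b j → g i ≤ g j) →
      Monotone (fun i => (toLex (b i, g i) : ℕ ×ₗ ℤ)) := by
    intro g hg i j hij
    rcases hij.eq_or_lt with rfl | hlt
    · exact le_rfl
    · rw [Prod.Lex.toLex_le_toLex]
      rcases (hb hij).eq_or_lt with he | hl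
      · exact Or.inr ⟨he, hg i j hlt he⟩
      · exact Or.inl hl
  have m1 : Monotone (F ∘ (1 : Equiv.Perm (Fin n))) := key f h1
  have m2 : Monotone (F ∘ h) := by
    have := key (fun i => f (h i)) h2
    have e : F ∘ h = fun i => (toLex (b i, f (h i)) : ℕ ×ₗ ℤ) := by
      funext i; simp [F, hh]
    rw [e]; exact this
  have := Tuple.unique_monotone m2 m1
  intro i
  have hi := congrFun this i
  simp only [Function.comp, F, Equiv.Perm.coe_one, id] at hi
  have := congrArg (fun x => (ofLex x).2) hi
  simpa using this

/-- `σ` is monotone (`ε = 1`) or antitone (`ε = -1`) on each block of `b`. -/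
def BlockInc {n : ℕ} (ε : ℤ) (b : Fin n → ℕ) (σ : Equiv.Perm (Fin n)) : Prop :=
  ∀ i j, i < j → b i = b j → ε * ((σ i : ℕ) : ℤ) < ε * ((σ j : ℕ) : ℤ)

/-- Same double coset modulo the Young subgroup of `b`. -/
def DRel {n : ℕ} (b : Fin n → ℕ) (σ τ : Equiv.Perm (Fin n)) : Prop :=
  ∃ g h : Equiv.Perm (Fin n), (∀ i, b (g i) = b i) ∧ (∀ i, b (h i) = b i) ∧ τ = g * σ * h

lemma binv {n : ℕ} {b : Fin n → ℕ} {g : Equiv.Perm (Fin n)} (hg : ∀ i, b (g i) = b i) :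
    ∀ i, b (g⁻¹ i) = b i := by
  intro i
  have := hg (g⁻¹ i)
  simpa using this.symm

lemma DRel.symm {n : ℕ} {b : Fin n → ℕ} {σ τ : Equiv.Perm (Fin n)} (h : DRel b σ τ) :
    DRel b τ σ := by
  obtain ⟨g, h, hg, hh, rfl⟩ := h
  exact ⟨g⁻¹, h⁻¹, binv hg, binv hh, by group⟩

lemma DRel.trans {n : ℕ} {b : Fin n → ℕ} {σ τ ρ : Equiv.Perm (Fin n)} (h1 : DRel b σ τ)
    (h2 : DRel b τ ρ) : DRel b σ ρ := by
  obtain ⟨g, h, hg, hh, rfl⟩ := h1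
  obtain ⟨g', h', hg', hh', rfl⟩ := h2
  exact ⟨g' * g, h * h', fun i => by simp [hg, hg'], fun i => by simp [hh, hh'], by group⟩

lemma DRel.inv {n : ℕ} {b : Fin n → ℕ} {σ τ : Equiv.Perm (Fin n)} (h : DRel b σ τ) :
    DRel b σ⁻¹ τ⁻¹ := by
  obtain ⟨g, h, hg, hh, rfl⟩ := h
  exact ⟨h⁻¹, g⁻¹, binv hh, binv hg, by group⟩

lemma drel_unique {n : ℕ} {ε : ℤ} (hε : ε = 1 ∨ ε = -1) {b : Fin n → ℕ} (hb : Monotone b)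
    {σ τ : Equiv.Perm (Fin n)} (h : DRel b σ τ)
    (s1 : BlockInc ε b σ) (s2 : BlockInc ε b σ⁻¹)
    (t1 : BlockInc ε b τ) (t2 : BlockInc ε b τ⁻¹) : σ = τ := by
  obtain ⟨g, h, hg, hh, hτ⟩ := h
  have bt : ∀ i, b (τ i) = b (σ (h i)) := by
    intro i; rw [hτ]; simp [hg]
  have mono : ∀ ρ : Equiv.Perm (Fin n), BlockInc ε b ρ → ∀ i j, i < j → b i = b j →
      ε * (b (ρ i) : ℤ) ≤ ε * (b (ρ j) : ℤ) := by
    intro ρ hρ i j hij hbij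
    have := hρ i j hij hbij
    rcases hε with rfl | rfl
    · have h' : ρ i ≤ ρ j := by rw [Fin.le_def]; omega
      have := hb h'; omega
    · have h' : ρ j ≤ ρ i := by rw [Fin.le_def]; omega
      have := hb h'; omega
  have e1 := block_unique b hb (fun i => ε * (b (σ i) : ℤ)) h hh (mono σ s1)
    (by intro i j hij hbij; have := mono τ t1 i j hij hbij; simpa [bt] using this)
  have bst : ∀ i, b (τ i) = b (σ i) := by
    intro i
    have := e1 i
    rw [bt]
    rcases hε with rfl | rfl <;> omega
  have hk : ∀ i, b ((σ * τ⁻¹) i) = b i := by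
    intro i
    have := bst (τ⁻¹ i)
    simpa using this.symm
  have e2 := block_unique b hb (fun i => ε * (((σ⁻¹ i : Fin n) : ℕ) : ℤ)) (σ * τ⁻¹) hk
    (fun i j hij hbij => (s2 i j hij hbij).le)
    (by intro i j hij hbij; simpa using (t2 i j hij hbij).le)
  have e3 : τ⁻¹ = σ⁻¹ := by
    ext i
    have := e2 i
    have hs : σ⁻¹ ((σ * τ⁻¹) i) = τ⁻¹ i := by simp
    rw [hs] at this
    rcases hε with rfl | rfl <;> omega
  exact (inv_injective e3).symm

/-- objective function -/
def obj {n : ℕ} (σ : Equiv.Perm (Fin n)) : ℤ := ∑ i : Fin n, ((i : ℕ) : ℤ) * ((σ i : ℕ) : ℤ)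

lemma obj_inv {n : ℕ} (σ : Equiv.Perm (Fin n)) : obj σ⁻¹ = obj σ := by
  unfold obj
  rw [← Equiv.sum_comp σ]
  refine Finset.sum_congr rfl fun i _ => ?_
  simp [mul_comm]

lemma obj_swap {n : ℕ} (σ : Equiv.Perm (Fin n)) (i j : Fin n) (hij : i ≠ j) :
    obj (σ * Equiv.swap i j) - obj σ =
      (((j : ℕ) : ℤ) - ((i : ℕ) : ℤ)) * (((σ i : ℕ) : ℤ) - ((σ j : ℕ) : ℤ)) := by
  unfold obj
  rw [← Finset.sum_sub_distrib]
  rw [← Finset.sum_subset (Finset.subset_univ {i, j})]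
  · rw [Finset.sum_pair hij]
    simp
    ring
  · intro x _ hx
    simp only [Finset.mem_insert, Finset.mem_singleton, not_or] at hx
    simp [Equiv.swap_apply_of_ne_of_ne hx.1 hx.2]

lemma blockInc_of_max {n : ℕ} {ε : ℤ} (hε : ε = 1 ∨ ε = -1) {b : Fin n → ℕ}
    {σ τ : Equiv.Perm (Fin n)} (h : DRel b σ τ)
    (hmax : ∀ ρ, DRel b σ ρ → ε * obj ρ ≤ ε * obj τ) : BlockInc ε b τ := by
  intro i j hij hbij
  by_contra hcon
  have hne : (τ i : ℕ) ≠ (τ j : ℕ) := by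
    intro he
    exact hij.ne (τ.injective (Fin.ext he))
  have hsw : ∀ k, b (Equiv.swap i j k) = b k := by
    intro k
    rw [Equiv.swap_apply_def]
    split_ifs with h1 h2
    · rw [h1, hbij]
    · rw [h2, hbij]
    · rfl
  have := hmax (τ * Equiv.swap i j) (h.trans ⟨1, Equiv.swap i j, by simp, hsw, by simp⟩)
  have h2 := obj_swap τ i j hij.ne
  have h3 : (0 : ℤ) < ((j : ℕ) : ℤ) - ((i : ℕ) : ℤ) := by
    have : (i : ℕ) < j := hij
    omega
  rcases hε with rfl | rfl
  · have h4 : (0 : ℤ) < ((τ i : ℕ) : ℤ) - ((τ j : ℕ) : ℤ) := by omega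
    have := mul_pos h3 h4
    linarith
  · have h4 : ((τ i : ℕ) : ℤ) - ((τ j : ℕ) : ℤ) < 0 := by omega
    have := mul_neg_of_pos_of_neg h3 h4
    linarith

lemma exists_invol {n : ℕ} {ε : ℤ} (hε : ε = 1 ∨ ε = -1) {b : Fin n → ℕ} (hb : Monotone b)
    (σ : Equiv.Perm (Fin n)) (hσ : σ⁻¹ = σ) :
    ∃ τ, DRel b σ τ ∧ τ⁻¹ = τ ∧ BlockInc ε b τ := by
  classical
  obtain ⟨τ, hτ, hmax⟩ := Finset.exists_max_image
    (Finset.univ.filter fun τ => DRel b σ τ) (fun τ => ε * obj τ)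
    ⟨σ, by simp only [Finset.mem_filter, Finset.mem_univ, true_and]
           exact ⟨1, 1, by simp, by simp, by simp⟩⟩
  simp only [Finset.mem_filter, Finset.mem_univ, true_and] at hτ hmax
  have hinv : DRel b σ τ⁻¹ := by
    have := hτ.inv
    rwa [hσ] at this
  have a1 := blockInc_of_max hε hτ hmax
  have a2 : BlockInc ε b τ⁻¹ := blockInc_of_max hε hinv (by
    intro ρ hρ
    rw [obj_inv]
    exact hmax ρ hρ)
  refine ⟨τ, hτ, ?_, a1⟩
  exact drel_unique hε hb (hinv.symm.trans hτ) a2 (by simpa using a1) a1 a2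

lemma mem_invols {n : ℕ} {σ : Equiv.Perm (Fin n)} : σ ∈ Invols n ↔ σ⁻¹ = σ := by
  simp only [Invols, Finset.mem_filter, Finset.mem_univ, true_and]
  rw [mul_eq_one_iff_eq_inv]
  exact eq_comm

open Classical in
lemma card_le_block {n : ℕ} {ε δ : ℤ} (hε : ε = 1 ∨ ε = -1) (hδ : δ = 1 ∨ δ = -1)
    {b : Fin n → ℕ} (hb : Monotone b) :
    ((Invols n).filter (BlockInc ε b)).card ≤ ((Invols n).filter (BlockInc δ b)).card := by
  have ex : ∀ σ : Equiv.Perm (Fin n), ∃ τ, σ⁻¹ = σ →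
      DRel b σ τ ∧ τ⁻¹ = τ ∧ BlockInc δ b τ := by
    intro σ
    by_cases hσ : σ⁻¹ = σ
    · obtain ⟨τ, h⟩ := exists_invol hδ hb σ hσ
      exact ⟨τ, fun _ => h⟩
    · exact ⟨1, fun h => absurd h hσ⟩
  choose F hF using ex
  refine Finset.card_le_card_of_injOn F ?_ ?_
  · intro σ hσ
    simp only [Finset.coe_filter, Set.mem_setOf_eq, mem_invols] at hσ ⊢
    exact (hF σ hσ.1).2
  · intro σ hσ τ hτ he
    simp only [Finset.coe_filter, Set.mem_setOf_eq, mem_invols] at hσ hτ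
    have r1 := (hF σ hσ.1).1
    have r2 := (hF τ hτ.1).1
    rw [← he] at r2
    exact drel_unique hε hb (r1.trans r2.symm) hσ.2 (by rw [hσ.1]; exact hσ.2) hτ.2
      (by rw [hτ.1]; exact hτ.2)

/-- The block function of a set of cut points. -/
def blk (n : ℕ) (S : Finset ℕ) (i : Fin n) : ℕ := (S.filter (fun s => s ≤ (i : ℕ))).card

lemma blk_mono (n : ℕ) (S : Finset ℕ) : Monotone (blk n S) := by
  intro i j hij
  apply Finset.card_le_card
  intro s
  simp only [Finset.mem_filter]
  exact fun h => ⟨h.1, h.2.trans hij⟩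

lemma blk_eq {n : ℕ} {S : Finset ℕ} {i j : Fin n} (hij : i ≤ j) :
    blk n S i = blk n S j ↔ ∀ s ∈ S, (i : ℕ) < s → ¬ s ≤ (j : ℕ) := by
  have hsub : S.filter (fun s => s ≤ (i : ℕ)) ⊆ S.filter (fun s => s ≤ (j : ℕ)) := by
    intro s
    simp only [Finset.mem_filter]
    exact fun h => ⟨h.1, h.2.trans hij⟩
  constructor
  · intro h s hs h1 h2
    have := Finset.eq_of_subset_of_card_le hsub (le_of_eq h.symm)
    have hm : s ∈ S.filter (fun s => s ≤ (j : ℕ)) := by simp [hs, h2]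
    rw [← this] at hm
    simp only [Finset.mem_filter] at hm
    omega
  · intro h
    unfold blk
    congr 1
    refine Finset.Subset.antisymm hsub ?_
    intro s
    simp only [Finset.mem_filter]
    intro hs
    refine ⟨hs.1, ?_⟩
    by_contra hc
    exact h s hs.1 (by omega) hs.2

lemma blockInc_iff {n : ℕ} (ε : ℤ) (S : Finset ℕ) (σ : Equiv.Perm (Fin n)) :
    BlockInc ε (blk n S) σ ↔ ∀ k ∈ Finset.Icc 1 (n - 1), k ∉ S →
      ε * (permFun n σ (k - 1) : ℤ) < ε * (permFun n σ k : ℤ) := by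
  constructor
  · intro h k hk hkS
    rw [Finset.mem_Icc] at hk
    have hk1 : k < n := by omega
    have hk0 : k - 1 < n := by omega
    have := h ⟨k - 1, hk0⟩ ⟨k, hk1⟩ (by rw [Fin.lt_def]; simp only; omega)
      ((blk_eq (by rw [Fin.le_def]; simp only; omega)).2 (by
        intro s hs h1 h2
        simp only at h1 h2
        have : s = k := by omega
        exact hkS (this ▸ hs)))
    simpa [permFun, hk1, hk0] using this
  · intro h i j hij hb
    have hb' := (blk_eq hij.le).1 hb
    have key : ∀ d : ℕ, (i : ℕ) + d + 1 ≤ (j : ℕ) →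
        ε * (permFun n σ i : ℤ) < ε * (permFun n σ (i + d + 1) : ℤ) := by
      intro d
      induction d with
      | zero =>
        intro hd
        have := h (i + 0 + 1) (by rw [Finset.mem_Icc]; have := j.2; omega)
          (fun hs => hb' _ hs (by omega) hd)
        simpa using this
      | succ d ih =>
        intro hd
        have h1 := ih (by omega)
        have h2 := h (i + (d + 1) + 1) (by rw [Finset.mem_Icc]; have := j.2; omega)
          (fun hs => hb' _ hs (by omega) hd)
        refine h1.trans ?_
        simpa [add_assoc] using h2
    have hlt : (i : ℕ) < j := hij
    have := key (j - i - 1) (by omega)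
    rw [show (i : ℕ) + (j - i - 1) + 1 = j by omega] at this
    simpa [permFun] using this

lemma permFun_ne {n : ℕ} (σ : Equiv.Perm (Fin n)) {k : ℕ} (hk : k ∈ Finset.Icc 1 (n - 1)) :
    permFun n σ k ≠ permFun n σ (k - 1) := by
  rw [Finset.mem_Icc] at hk
  have hk1 : k < n := by omega
  have hk0 : k - 1 < n := by omega
  simp only [permFun, hk1, hk0, dif_pos]
  intro he
  have := σ.injective (Fin.ext he)
  simp only [Fin.mk.injEq] at this
  omega

lemma blockInc_one {n : ℕ} (S : Finset ℕ) (σ : Equiv.Perm (Fin n)) :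
    BlockInc 1 (blk n S) σ ↔ DesSet n σ ⊆ S := by
  rw [blockInc_iff]
  constructor
  · intro h k hk
    simp only [DesSet, Finset.mem_filter] at hk
    by_contra hc
    have := h k hk.1 hc
    omega
  · intro h k hk hkS
    have h1 := permFun_ne σ hk
    have h2 : ¬ permFun n σ k < permFun n σ (k - 1) := fun hlt =>
      hkS (h (by simp only [DesSet, Finset.mem_filter]; exact ⟨hk, hlt⟩))
    omega

lemma blockInc_neg {n : ℕ} (S : Finset ℕ) (σ : Equiv.Perm (Fin n)) :
    BlockInc (-1) (blk n S) σ ↔ Finset.Icc 1 (n - 1) \ DesSet n σ ⊆ S := by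
  rw [blockInc_iff]
  constructor
  · intro h k hk
    simp only [DesSet, Finset.mem_filter, Finset.mem_sdiff, not_and] at hk
    by_contra hc
    have := h k hk.1 hc
    have := hk.2 hk.1
    omega
  · intro h k hk hkS
    have h2 : permFun n σ k < permFun n σ (k - 1) := by
      by_contra hlt
      exact hkS (h (by simp only [DesSet, Finset.mem_filter, Finset.mem_sdiff, not_and]
                       exact ⟨hk, fun _ => hlt⟩))
    omega

lemma card_subset_eq (n : ℕ) (S : Finset ℕ) :
    ((Invols n).filter (fun σ => DesSet n σ ⊆ S)).card =
      ((Invols n).filter (fun σ => Finset.Icc 1 (n - 1) \ DesSet n σ ⊆ S)).card := by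
  classical
  have h := le_antisymm
    (card_le_block (n := n) (ε := 1) (δ := -1) (Or.inl rfl) (Or.inr rfl) (blk_mono n S))
    (card_le_block (Or.inr rfl) (Or.inl rfl) (blk_mono n S))
  simp only [blockInc_one, blockInc_neg] at h
  convert h

lemma fiber_eq {α : Type*} [DecidableEq α] (I : Finset α) (u v : α → Finset ℕ)
    (h : ∀ S, (I.filter (fun a => u a ⊆ S)).card = (I.filter (fun a => v a ⊆ S)).card) :
    ∀ S, (I.filter (fun a => u a = S)).card = (I.filter (fun a => v a = S)).card := by
  have dec : ∀ (w : α → Finset ℕ) S, (I.filter (fun a => w a ⊆ S)).card =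
      (I.filter (fun a => w a = S)).card +
        ∑ T ∈ S.ssubsets, (I.filter (fun a => w a = T)).card := by
    intro w S
    rw [Finset.card_eq_sum_card_fiberwise (f := w) (t := S.powerset)
      (by intro a ha
          simp only [Finset.coe_filter, Set.mem_setOf_eq] at ha
          simpa using ha.2)]
    have e : ∀ T ∈ S.powerset, ((I.filter (fun a => w a ⊆ S)).filter (fun a => w a = T)).card =
        (I.filter (fun a => w a = T)).card := by
      intro T hT
      rw [Finset.mem_powerset] at hT
      congr 1
      ext a
      simp only [Finset.mem_filter]
      constructor
      · rintro ⟨⟨h1, _⟩, h3⟩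
        exact ⟨h1, h3⟩
      · rintro ⟨h1, h3⟩
        exact ⟨⟨h1, h3 ▸ hT⟩, h3⟩
    rw [Finset.sum_congr rfl e]
    have : S.ssubsets = S.powerset.erase S := rfl
    rw [this, Finset.add_sum_erase S.powerset
      (fun T => (I.filter (fun a => w a = T)).card) (Finset.mem_powerset_self S)]
  intro S
  induction S using Finset.strongInduction with
  | H S ih =>
    have h1 := dec u S
    have h2 := dec v S
    have h3 := h S
    have h4 : ∑ T ∈ S.ssubsets, (I.filter (fun a => u a = T)).card =
        ∑ T ∈ S.ssubsets, (I.filter (fun a => v a = T)).card :=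
      Finset.sum_congr rfl fun T hT => ih T (Finset.mem_ssubsets.1 hT)
    omega

lemma exists_bij {α : Type*} [DecidableEq α] (I : Finset α) (u v : α → Finset ℕ)
    (h : ∀ S, (I.filter (fun a => u a = S)).card = (I.filter (fun a => v a = S)).card) :
    ∃ f : α → α, Set.BijOn f (↑I) (↑I) ∧ ∀ a ∈ I, v (f a) = u a := by
  have key : ∀ (w : α → Finset ℕ) S, Fintype.card {a : {a // a ∈ I} // w a = S} =
      (I.filter (fun a => w a = S)).card := by
    intro w S
    rw [← Fintype.card_coe]
    refine Fintype.card_congr ((Equiv.subtypeSubtypeEquivSubtypeInter (fun a => a ∈ I)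
      (fun a => w a = S)).trans (Equiv.subtypeEquivRight ?_))
    intro a
    simp
  let e : {a // a ∈ I} ≃ {a // a ∈ I} := Equiv.ofFiberEquiv (f := fun a => u a.1)
    (g := fun a => v a.1)
    (fun S => Fintype.equivOfCardEq (by rw [key u S, key v S, h S]))
  have he : ∀ a, v (e a).1 = u a.1 := fun a => 
    Equiv.ofFiberEquiv_map (f := fun a : {a // a ∈ I} => u a.1) (g := fun a : {a // a ∈ I} => v a.1) _ a
  refine ⟨fun a => if ha : a ∈ I then (e ⟨a, ha⟩).1 else a, ⟨?_, ?_, ?_⟩, ?_⟩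
  · intro a ha
    have ha' : a ∈ I := ha
    simp [ha']
  · intro a ha c hc hac
    have ha' : a ∈ I := ha
    have hc' : c ∈ I := hc
    simp only [ha', hc', dif_pos] at hac
    have := e.injective (Subtype.ext hac)
    exact congrArg Subtype.val this
  · intro c hc
    have hc' : c ∈ I := hc
    refine ⟨(e.symm ⟨c, hc'⟩).1, (e.symm ⟨c, hc'⟩).2, ?_⟩
    simp
  · intro a ha
    simp only [ha, dif_pos]
    exact he ⟨a, ha⟩

lemma dpart_add (n i : ℕ) (hi : i ∈ Finset.Icc 1 (n - 1)) (σ τ : Equiv.Perm (Fin n))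
    (h : DesSet n τ = Finset.Icc 1 (n - 1) \ DesSet n σ) :
    dpart n i τ + dpart n i σ = n - i := by
  unfold dpart
  rw [h, ← Finset.card_union_of_disjoint]
  · have : Finset.filter (fun j => i ≤ j) (Finset.Icc 1 (n - 1) \ DesSet n σ) ∪
        Finset.filter (fun j => i ≤ j) (DesSet n σ) = Finset.Icc i (n - 1) := by
      rw [Finset.mem_Icc] at hi
      ext k
      simp only [DesSet, Finset.mem_union, Finset.mem_filter, Finset.mem_sdiff, Finset.mem_Icc]
      by_cases hk : permFun n σ k < permFun n σ (k - 1) <;>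
        simp only [hk, and_true, and_false, false_and, or_false, not_false_eq_true] <;> omega
    rw [this, Nat.card_Icc]
    rw [Finset.mem_Icc] at hi
    omega
  · rw [Finset.disjoint_left]
    intro k hk hk'
    simp only [Finset.mem_filter, Finset.mem_sdiff] at hk hk'
    exact hk.1.2 hk'.1

theorem involution_descent_complement_bijection (n : ℕ) (hn : 1 ≤ n) :
    ∃ f : Equiv.Perm (Fin n) → Equiv.Perm (Fin n),
      Set.BijOn f (↑(Invols n)) (↑(Invols n)) ∧
      (∀ σ ∈ Invols n, DesSet n (f σ) = Finset.Icc 1 (n - 1) \ DesSet n σ) ∧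
      (∀ σ ∈ Invols n, ∀ i ∈ Finset.Icc 1 (n - 1),
        dpart n i (f σ) = n - i - dpart n i σ) ∧
      (∀ x : ℕ → ℚ, (∀ i, x i ≠ 0) →
        ∑ σ ∈ Invols n, ∏ i ∈ Finset.Icc 1 (n - 1), x i ^ dpart n i σ =
          (∏ i ∈ Finset.Icc 1 (n - 1), x i ^ (n - i)) *
            ∑ σ ∈ Invols n, ∏ i ∈ Finset.Icc 1 (n - 1), (x i)⁻¹ ^ dpart n i σ) := by
  classical
  obtain ⟨f, hf, hd⟩ := exists_bij (Invols n) (fun σ => Finset.Icc 1 (n - 1) \ DesSet n σ)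
    (fun σ => DesSet n σ)
    (fiber_eq _ _ _ (fun S => (card_subset_eq n S).symm))
  refine ⟨f, hf, hd, ?_, ?_⟩
  · intro σ hσ i hi
    have := dpart_add n i hi σ (f σ) (hd σ hσ)
    omega
  · intro x hx
    rw [Finset.mul_sum]
    symm
    refine Finset.sum_nbij f (fun σ hσ => hf.mapsTo hσ) hf.injOn hf.surjOn ?_
    intro σ hσ
    rw [← Finset.prod_mul_distrib]
    refine Finset.prod_congr rfl fun i hi => ?_
    have := dpart_add n i hi σ (f σ) (hd σ hσ)
    rw [← this, pow_add, inv_pow, mul_assoc, mul_inv_cancel₀ (pow_ne_zero _ (hx i)), mul_one]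
end
end

section
/- Let n be a positive integer and let β_{n,k} denote the number of involutions in S_n with exactly k descents. Then for all integers k with 1 ≤ k ≤ 0.175·n^{0.931} one has β_{n,k−1} < β_{n,k} and β_{n,n−1−k} > β_{n,n−k}. -/
noncomputable section
open Finset

/-- The set of fixed-point-free involutions in the symmetric group on `Fin n`. -/
def FPFInvols (n : ℕ) : Finset (Equiv.Perm (Fin n)) :=
  Finset.univ.filter (fun σ => σ * σ = 1 ∧ ∀ i, σ i ≠ i)

/-- The number of descents of `σ`. -/
def desStat (n : ℕ) (σ : Equiv.Perm (Fin n)) : ℕ := (DesSet n σ).card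

/-- The major index of `σ`. -/
def majStat (n : ℕ) (σ : Equiv.Perm (Fin n)) : ℕ := ∑ i ∈ DesSet n σ, i

/-- `β_{n,k}`: the number of involutions in `S_n` with exactly `k` descents. -/
def invDesCount (n k : ℕ) : ℕ :=
  ((Invols n).filter (fun σ => desStat n σ = k)).card

/-- Two tuples with the same fibre sizes differ by a permutation. -/
lemma exists_perm_of_fibers {n : ℕ} {β : Type*} [DecidableEq β] (f g : Fin n → β)
    (h : ∀ c, (univ.filter (fun i => f i = c)).card = (univ.filter (fun i => g i = c)).card) :
    ∃ τ : Equiv.Perm (Fin n), g ∘ τ = f := by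
  have e : ∀ c, Nonempty ({a // f a = c} ≃ {b // g b = c}) := by
    intro c
    apply Fintype.card_eq.mp
    rw [Fintype.card_subtype, Fintype.card_subtype]
    exact h c
  let e' := fun c => Classical.choice (e c)
  exact ⟨Equiv.ofFiberEquiv e', funext fun i => Equiv.ofFiberEquiv_map e' i⟩

lemma monotone_eq_of_fibers {n : ℕ} {β : Type*} [LinearOrder β] (f g : Fin n → β)
    (hf : Monotone f) (hg : Monotone g)
    (h : ∀ c, (univ.filter (fun i => f i = c)).card = (univ.filter (fun i => g i = c)).card) :
    f = g := by
  obtain ⟨τ, hτ⟩ := exists_perm_of_fibers f g h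
  have := Tuple.unique_monotone (f := g) (σ := τ) (τ := 1) (by rw [hτ]; exact hf)
    (by simpa using hg)
  rw [hτ] at this
  simpa using this

/-- Symmetric matrices of total sum `n`. -/
def SymMat (m n : ℕ) : Finset (Fin m × Fin m → ℕ) :=
  (Finset.piAntidiag univ n).filter (fun A => ∀ p : Fin m × Fin m, A p.swap = A p)

lemma mem_SymMat {m n : ℕ} {A : Fin m × Fin m → ℕ} :
    A ∈ SymMat m n ↔ ∑ p, A p = n ∧ ∀ p : Fin m × Fin m, A p.swap = A p := by
  simp [SymMat]

/-- Words compatible with a permutation. -/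
def Words (m n : ℕ) (σ : Equiv.Perm (Fin n)) : Finset (Fin n → Fin m) :=
  univ.filter (fun a => ∀ i j, i < j → a i ≤ a j ∧ (a i = a j → σ i < σ j))

lemma mem_Words {m n : ℕ} {σ : Equiv.Perm (Fin n)} {a : Fin n → Fin m} :
    a ∈ Words m n σ ↔ ∀ i j, i < j → a i ≤ a j ∧ (a i = a j → σ i < σ j) := by
  simp [Words]

/-- pair word, with the lexicographic order -/
def pairW {m n : ℕ} (σ : Equiv.Perm (Fin n)) (a : Fin n → Fin m) : Fin n → Fin m ×ₗ Fin m :=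
  fun i => toLex (a i, a (σ i))

/-- swap on lexicographic pairs -/
def swapL {m : ℕ} (p : Fin m ×ₗ Fin m) : Fin m ×ₗ Fin m := toLex (ofLex p).swap

lemma swapL_swapL {m : ℕ} (p : Fin m ×ₗ Fin m) : swapL (swapL p) = p := rfl

lemma pairW_monotone {m n : ℕ} {σ : Equiv.Perm (Fin n)} {a : Fin n → Fin m}
    (ha : a ∈ Words m n σ) : Monotone (pairW σ a) := by
  rw [mem_Words] at ha
  have hm : Monotone a := by
    intro i j hij
    rcases hij.lt_or_eq with h | h
    · exact (ha i j h).1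
    · rw [h]
  intro i j hij
  rcases hij.lt_or_eq with h | h
  · rw [pairW, pairW, Prod.Lex.toLex_le_toLex]
    rcases (ha i j h).1.lt_or_eq with h1 | h1
    · exact Or.inl h1
    · exact Or.inr ⟨h1, hm ((ha i j h).2 h1).le⟩
  · rw [h]

lemma pairW_sort {m n : ℕ} {σ : Equiv.Perm (Fin n)} {a : Fin n → Fin m} (hσ : σ * σ = 1)
    (ha : a ∈ Words m n σ) : σ = Tuple.sort (swapL ∘ pairW σ a) := by
  have hs : ∀ i, σ (σ i) = i := fun i => by rw [← Equiv.Perm.mul_apply, hσ]; rfl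
  have e : (swapL ∘ pairW σ a) ∘ σ = pairW σ a := by
    funext i
    simp [swapL, pairW, hs]
  rw [Tuple.eq_sort_iff]
  constructor
  · rw [e]; exact pairW_monotone ha
  · intro i j hij h
    have h' : pairW σ a i = pairW σ a j := by
      have := congrFun e i; have := congrFun e j
      simp only [Function.comp_apply] at *
      simp_all
    rw [mem_Words] at ha
    apply (ha i j hij).2
    have := congrArg (fun p => (ofLex p).1) h'
    simpa [pairW] using this

/-- the matrix of a pair -/
def matOf {m n : ℕ} (σ : Equiv.Perm (Fin n)) (a : Fin n → Fin m) : Fin m × Fin m → ℕ :=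
  fun p => (univ.filter (fun i => pairW σ a i = toLex p)).card

lemma matOf_mem {m n : ℕ} {σ : Equiv.Perm (Fin n)} (a : Fin n → Fin m) (hσ : σ * σ = 1) :
    matOf σ a ∈ SymMat m n := by
  have hs : ∀ i, σ (σ i) = i := fun i => by rw [← Equiv.Perm.mul_apply, hσ]; rfl
  rw [mem_SymMat]
  constructor
  · have := Finset.card_eq_sum_card_fiberwise (s := (univ : Finset (Fin n)))
      (t := (univ : Finset (Fin m × Fin m))) (f := fun i => ofLex (pairW σ a i)) (by simp)
    simp only [card_univ, Fintype.card_fin] at this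
    exact this.symm
  · intro p
    unfold matOf
    apply Finset.card_bij (fun i _ => σ i)
    · intro i hi
      refine mem_filter.2 ⟨mem_univ _, ?_⟩
      have h1 : (a i, a (σ i)) = p.swap := (mem_filter.1 hi).2
      have : (a (σ i), a i) = p := by
        rw [← Prod.swap_swap p, ← h1]; rfl
      rw [← this]
      simp only [pairW, hs]
    · intro i _ j _ h
      exact σ.injective h
    · intro i hi
      refine ⟨σ i, ?_, hs i⟩
      refine mem_filter.2 ⟨mem_univ _, ?_⟩
      have h1 : (a i, a (σ i)) = p := (mem_filter.1 hi).2
      rw [← h1]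
      simp only [pairW, hs, Prod.swap_prod_mk]

lemma matOf_surj {m n : ℕ} (A : Fin m × Fin m → ℕ) (hA : A ∈ SymMat m n) :
    ∃ σ : Equiv.Perm (Fin n), ∃ a : Fin n → Fin m, σ * σ = 1 ∧ a ∈ Words m n σ ∧
      matOf σ a = A := by
  rw [mem_SymMat] at hA
  obtain ⟨hsum, hsym⟩ := hA
  -- a tuple with the given fibres
  have hcard : Fintype.card (Σ p : Fin m × Fin m, Fin (A p)) = Fintype.card (Fin n) := by
    simp [Fintype.card_sigma, hsum]
  obtain ⟨e⟩ := Fintype.card_eq.mp hcard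
  let f : Fin n → Fin m ×ₗ Fin m := fun i => toLex (e.symm i).1
  have hf : ∀ p, (univ.filter (fun i => f i = toLex p)).card = A p := by
    intro p
    have : (univ.filter (fun i => f i = toLex p)).card = (univ : Finset (Fin (A p))).card := by
      symm
      apply Finset.card_bij (fun x _ => e ⟨p, x⟩)
      · intro x _
        simp [f]
      · intro x _ y _ h
        have := e.injective h
        simpa using this
      · intro i hi
        simp only [mem_filter, mem_univ, true_and, f] at hi
        have h1 : (e.symm i).1 = p := hi
        subst h1
        exact ⟨(e.symm i).2, mem_univ _, by simp⟩
    rw [this]; simp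
  let p : Fin n → Fin m ×ₗ Fin m := f ∘ Tuple.sort f
  have hpm : Monotone p := Tuple.monotone_sort f
  have hp : ∀ c, (univ.filter (fun i => p i = c)).card = A (ofLex c) := by
    intro c
    rw [← hf (ofLex c)]
    apply Finset.card_bij (fun i _ => Tuple.sort f i)
    · intro i hi
      exact mem_filter.2 ⟨mem_univ _, (mem_filter.1 hi).2⟩
    · intro i _ j _ h
      exact (Tuple.sort f).injective h
    · intro i hi
      refine ⟨(Tuple.sort f).symm i, ?_, by simp⟩
      refine mem_filter.2 ⟨mem_univ _, ?_⟩
      have := (mem_filter.1 hi).2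
      simp only [p, Function.comp_apply, Equiv.apply_symm_apply]
      exact this
  let σ : Equiv.Perm (Fin n) := Tuple.sort (swapL ∘ p)
  obtain ⟨hσm, hσt⟩ := (Tuple.eq_sort_iff (f := swapL ∘ p) (σ := σ)).1 rfl
  have hpe : (swapL ∘ p) ∘ σ = p := by
    apply monotone_eq_of_fibers _ _ hσm hpm
    intro c
    rw [hp c, ← hsym, ← ofLex_toLex ((ofLex c).swap), ← hp]
    apply Finset.card_bij (fun i _ => σ i)
    · intro i hi
      refine mem_filter.2 ⟨mem_univ _, ?_⟩
      have h0 := (mem_filter.1 hi).2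
      rw [← h0]; rfl
    · intro i _ j _ h
      exact σ.injective h
    · intro i hi
      refine ⟨σ.symm i, ?_, by simp⟩
      refine mem_filter.2 ⟨mem_univ _, ?_⟩
      have h0 := (mem_filter.1 hi).2
      simp only [Function.comp_apply, Equiv.apply_symm_apply]
      rw [h0]; rfl
  have hpσ : ∀ i, p (σ i) = swapL (p i) := by
    intro i
    have := congrFun hpe i
    simp only [Function.comp_apply] at this
    rw [← this, swapL_swapL]
  have hinv : σ⁻¹ = σ := by
    show σ⁻¹ = Tuple.sort (swapL ∘ p)
    rw [Tuple.eq_sort_iff]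
    have e2 : (swapL ∘ p) ∘ ⇑σ⁻¹ = p := by
      funext i
      have := hpσ (σ⁻¹ i)
      simp at this
      simp only [Function.comp_apply]
      exact this.symm
    constructor
    · rw [e2]; exact hpm
    · intro i j hij h
      by_contra hcon
      have hlt : σ⁻¹ j < σ⁻¹ i := by
        rcases lt_trichotomy (σ⁻¹ i) (σ⁻¹ j) with h1 | h1 | h1
        · exact absurd h1 hcon
        · exact absurd (σ⁻¹.injective h1) hij.ne
        · exact h1
      have h3 : p i = p j := by
        have h4 := congrFun e2 i
        have h5 := congrFun e2 j
        simp only [Function.comp_apply] at h4 h5 h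
        rw [← h4, ← h5, h]
      have := hσt _ _ hlt (by simp [h3])
      simp at this
      exact absurd this hij.le.not_gt
  have hσσ : σ * σ = 1 := by
    nth_rewrite 1 [← hinv]
    simp
  let a : Fin n → Fin m := fun i => (ofLex (p i)).1
  have haσ : ∀ i, a (σ i) = (ofLex (p i)).2 := by
    intro i
    show (ofLex (p (σ i))).1 = _
    rw [hpσ]; rfl
  have hpw : pairW σ a = p := by
    funext i
    simp only [pairW, haσ]
    rfl
  refine ⟨σ, a, hσσ, ?_, ?_⟩
  · rw [mem_Words]
    intro i j hij
    have h1 := hpm hij.le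
    rw [Prod.Lex.le_iff] at h1
    constructor
    · rcases h1 with h1 | h1
      · exact h1.le
      · exact h1.1.le
    · intro h2
      have h3 : (ofLex (p i)).2 ≤ (ofLex (p j)).2 := by
        rcases h1 with h1 | h1
        · exact absurd h2 h1.ne
        · exact h1.2
      rcases h3.lt_or_eq with h4 | h4
      · by_contra hcon
        have h5 : σ j ≤ σ i := not_lt.mp hcon
        have h6 : a (σ j) ≤ a (σ i) := by
          have h7 := hpm h5
          rw [Prod.Lex.le_iff] at h7
          rcases h7 with h7 | h7
          · exact h7.le
          · exact h7.1.le
        rw [haσ, haσ] at h6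
        exact absurd h4 h6.not_gt
      · have h5 : p i = p j := by
          have : ofLex (p i) = ofLex (p j) := Prod.ext h2 h4
          exact this
        apply hσt i j hij
        have h6 := congrFun hpe i
        have h7 := congrFun hpe j
        simp only [Function.comp_apply] at h6 h7 ⊢
        rw [h6, h7, h5]
  · funext q
    unfold matOf
    rw [hpw, hp]
    rfl

lemma sum_card_Words (m n : ℕ) :
    ∑ σ ∈ Invols n, (Words m n σ).card = (SymMat m n).card := by
  rw [← Finset.card_sigma]
  apply Finset.card_bij (fun x _ => matOf x.1 x.2)
  · rintro ⟨σ, a⟩ hx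
    simp only [mem_sigma, Invols, mem_filter, mem_univ, true_and] at hx
    exact matOf_mem a hx.1
  · rintro ⟨σ, a⟩ hx ⟨τ, b⟩ hy h
    simp only [mem_sigma, Invols, mem_filter, mem_univ, true_and] at hx hy
    simp only at h
    have h1 : pairW σ a = pairW τ b := by
      apply monotone_eq_of_fibers _ _ (pairW_monotone hx.2) (pairW_monotone hy.2)
      intro c
      exact congrFun h (ofLex c)
    have h2 : σ = τ := by
      rw [pairW_sort hx.1 hx.2, pairW_sort hy.1 hy.2, h1]
    have h3 : a = b := by
      funext i
      have := congrArg (fun p => (ofLex p).1) (congrFun h1 i)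
      simpa [pairW] using this
    rw [h2, h3]
  · intro A hA
    obtain ⟨σ, a, h1, h2, h3⟩ := matOf_surj A hA
    exact ⟨⟨σ, a⟩, by simp [Invols, h1, h2], h3⟩
/-- weighted count at a cell -/
def cellSum (m n : ℕ) (x : Fin m × Fin m) : ℕ := ∑ A ∈ SymMat m n, A x

lemma sum_cellSum (m n : ℕ) : ∑ x, cellSum m n x = n * (SymMat m n).card := by
  unfold cellSum
  rw [Finset.sum_comm]
  rw [Finset.sum_congr rfl (fun A hA => (mem_SymMat.1 hA).1)]
  simp [mul_comm]

/-- generic step: adding a symmetric block `B` with `B x = 1`, of total sum `s`. -/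
lemma cellSum_step (m n s : ℕ) (x : Fin m × Fin m) (B : Fin m × Fin m → ℕ)
    (hB : B ∈ SymMat m s) (hx : B x = 1)
    (hle : ∀ A : Fin m × Fin m → ℕ, (∀ p : Fin m × Fin m, A p.swap = A p) → 1 ≤ A x → B ≤ A) :
    cellSum m (n + s) x = (SymMat m n).card + cellSum m n x := by
  unfold cellSum
  rw [mem_SymMat] at hB
  have h1 : ∑ A ∈ SymMat m (n + s), A x
      = ∑ A ∈ (SymMat m (n + s)).filter (fun A => 1 ≤ A x), A x := by
    rw [Finset.sum_filter]
    apply Finset.sum_congr rfl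
    intro A _
    split_ifs with h
    · rfl
    · omega
  have h2 : (SymMat m n).card + ∑ A ∈ SymMat m n, A x = ∑ A ∈ SymMat m n, (A x + 1) := by
    rw [Finset.sum_add_distrib]; simp [add_comm]
  rw [h1, h2]
  symm
  apply Finset.sum_bij (fun A _ => A + B)
  · intro A hA
    rw [mem_SymMat] at hA
    rw [mem_filter, mem_SymMat]
    refine ⟨⟨?_, ?_⟩, ?_⟩
    · simp only [Pi.add_apply, Finset.sum_add_distrib, hA.1, hB.1]
    · intro p; simp [hA.2, hB.2]
    · simp [hx]
  · intro A _ A' _ h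
    exact add_right_cancel h
  · intro A hA
    rw [mem_filter, mem_SymMat] at hA
    have hl := hle A hA.1.2 hA.2
    refine ⟨A - B, ?_, tsub_add_cancel_of_le hl⟩
    rw [mem_SymMat]
    constructor
    · have h3 : ∑ p, A p = ∑ p, (A - B) p + ∑ p, B p := by
        rw [← Finset.sum_add_distrib]
        apply Finset.sum_congr rfl
        intro p _
        have : B p ≤ A p := hl p
        simp only [Pi.sub_apply]
        omega
      rw [hA.1.1, hB.1] at h3
      omega
    · intro p
      simp [hA.1.2, hB.2]
  · intro A _
    simp [hx]

lemma cellSum_diag (m n : ℕ) (i : Fin m) :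
    cellSum m (n + 1) (i, i) = (SymMat m n).card + cellSum m n (i, i) := by
  apply cellSum_step m n 1 (i, i) (Pi.single (i, i) 1)
  · rw [mem_SymMat]
    constructor
    · rw [Finset.sum_pi_single']; simp
    · rintro ⟨a, b⟩
      simp only [Pi.single_apply, Prod.swap_prod_mk, Prod.mk.injEq]
      congr 1
      apply propext; tauto
  · simp
  · intro A _ hA p
    by_cases h : p = (i, i)
    · subst h; simpa using hA
    · simp [Pi.single_apply, h]

lemma cellSum_off (m n : ℕ) (i j : Fin m) (hij : i ≠ j) :
    cellSum m (n + 2) (i, j) = (SymMat m n).card + cellSum m n (i, j) := by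
  apply cellSum_step m n 2 (i, j) (Pi.single (i, j) 1 + Pi.single (j, i) 1)
  · rw [mem_SymMat]
    constructor
    · simp only [Pi.add_apply]
      rw [Finset.sum_add_distrib, Finset.sum_pi_single', Finset.sum_pi_single']; simp
    · rintro ⟨a, b⟩
      simp only [Pi.single_apply, Prod.swap_prod_mk, Prod.mk.injEq, Pi.add_apply]
      rw [add_comm]
      congr 2
      · apply propext; tauto
      · apply propext; tauto
  · simp [Pi.single_apply, hij]
  · intro A hs hA p
    by_cases h : p = (i, j)
    · subst h; simpa [Pi.single_apply, hij] using hA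
    · by_cases h' : p = (j, i)
      · subst h'
        have := hs (i, j)
        simp only [Prod.swap_prod_mk] at this
        simp [Pi.single_apply, hij.symm, this, hA]
      · simp [Pi.single_apply, h, h']

lemma SymMat_rec (m n : ℕ) :
    (n + 2) * (SymMat m (n + 2)).card
      = m * (SymMat m (n + 1)).card + (m ^ 2 + n) * (SymMat m n).card := by
  have h : ∀ x : Fin m × Fin m, cellSum m (n + 2) x
      = (if x.1 = x.2 then (SymMat m (n + 1)).card else 0) + (SymMat m n).card
        + cellSum m n x := by
    rintro ⟨i, j⟩
    by_cases hij : i = j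
    · subst hij
      rw [if_pos rfl, show n + 2 = (n + 1) + 1 from rfl, cellSum_diag, cellSum_diag]
      ring
    · rw [cellSum_off _ _ _ _ hij]
      simp [hij]
  rw [← sum_cellSum, Finset.sum_congr rfl (fun x _ => h x), Finset.sum_add_distrib,
    Finset.sum_add_distrib, sum_cellSum, Fintype.sum_prod_type]
  simp
  ring
/-- number of non-descents among positions `1..i` -/
def ascC (n : ℕ) (σ : Equiv.Perm (Fin n)) (i : ℕ) : ℕ :=
  ((Finset.Icc 1 i).filter (fun t => t ∉ DesSet n σ)).card

lemma ascC_succ (n : ℕ) (σ : Equiv.Perm (Fin n)) (i : ℕ) :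
    ascC n σ (i + 1) = ascC n σ i + if i + 1 ∈ DesSet n σ then 0 else 1 := by
  unfold ascC
  rw [← Finset.insert_Icc_right_eq_Icc_add_one (by omega), Finset.filter_insert]
  by_cases h : i + 1 ∈ DesSet n σ
  · simp [h]
  · rw [if_pos h, if_neg h, Finset.card_insert_of_notMem]
    simp

lemma ascC_le (n : ℕ) (σ : Equiv.Perm (Fin n)) {i j : ℕ} (h : i ≤ j) :
    ascC n σ i ≤ ascC n σ j ∧ ascC n σ j + i ≤ ascC n σ i + j := by
  induction j, h using Nat.le_induction with
  | base => simp
  | succ j hj ih =>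
    rw [ascC_succ]
    split_ifs <;> omega

lemma ascC_zero (n : ℕ) (σ : Equiv.Perm (Fin n)) : ascC n σ 0 = 0 := by
  simp [ascC]

lemma desStat_add_ascC (n : ℕ) (σ : Equiv.Perm (Fin n)) :
    desStat n σ + ascC n σ (n - 1) = n - 1 := by
  have h : DesSet n σ = (Finset.Icc 1 (n - 1)).filter (fun t => t ∈ DesSet n σ) := by
    ext t
    simp only [DesSet, mem_filter]
    tauto
  unfold desStat ascC
  rw [h]
  have := Finset.card_filter_add_card_filter_not (s := Finset.Icc 1 (n - 1))
    (fun t => t ∈ DesSet n σ)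
  rw [Nat.card_Icc] at this
  rw [← h]
  rw [← h] at this
  omega

lemma permFun_inj (n : ℕ) (σ : Equiv.Perm (Fin n)) {i j : ℕ} (hi : i < n) (hj : j < n)
    (h : permFun n σ i = permFun n σ j) : i = j := by
  unfold permFun at h
  rw [dif_pos hi, dif_pos hj] at h
  have := σ.injective (Fin.ext h)
  simpa using this

lemma mem_DesSet_succ (n : ℕ) (σ : Equiv.Perm (Fin n)) {i : ℕ} (hi : i + 1 < n) :
    i + 1 ∈ DesSet n σ ↔ permFun n σ (i + 1) < permFun n σ i := by
  unfold DesSet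
  rw [mem_filter, mem_Icc]
  simp only [Nat.add_sub_cancel]
  constructor
  · exact fun h => h.2
  · exact fun h => ⟨by omega, h⟩

lemma ascC_eq_desc (n : ℕ) (σ : Equiv.Perm (Fin n)) {i j : ℕ} (h : i + 1 ≤ j) (hj : j < n)
    (he : ascC n σ i = ascC n σ j) : permFun n σ j < permFun n σ i := by
  induction j, h using Nat.le_induction with
  | base =>
    rw [ascC_succ] at he
    by_cases hd : i + 1 ∈ DesSet n σ
    · exact (mem_DesSet_succ n σ hj).1 hd
    · rw [if_neg hd] at he; omega
  | succ j hij ih =>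
    rw [ascC_succ] at he
    have h1 := (ascC_le n σ (show i ≤ j by omega)).1
    by_cases hd : j + 1 ∈ DesSet n σ
    · have h2 := (mem_DesSet_succ n σ hj).1 hd
      rw [if_pos hd] at he
      have := ih (by omega) he
      omega
    · rw [if_neg hd] at he; omega

lemma ascC_eq_asc (n : ℕ) (σ : Equiv.Perm (Fin n)) {i j : ℕ} (h : i + 1 ≤ j) (hj : j < n)
    (he : ascC n σ j + i = ascC n σ i + j) : permFun n σ i < permFun n σ j := by
  induction j, h using Nat.le_induction with
  | base =>
    rw [ascC_succ] at he
    by_cases hd : i + 1 ∈ DesSet n σ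
    · rw [if_pos hd] at he; omega
    · have h3 := fun h => permFun_inj n σ (i := i) (j := i + 1) (by omega) hj h
      rw [mem_DesSet_succ n σ hj] at hd
      by_contra hc
      have := h3 (by omega)
      omega
  | succ j hij ih =>
    rw [ascC_succ] at he
    have h1 := (ascC_le n σ (show i ≤ j by omega)).2
    by_cases hd : j + 1 ∈ DesSet n σ
    · rw [if_pos hd] at he; omega
    · rw [if_neg hd] at he
      have h4 := ih (by omega) (by omega)
      rw [mem_DesSet_succ n σ hj] at hd
      omega

lemma permFun_fin (n : ℕ) (σ : Equiv.Perm (Fin n)) (i : Fin n) : permFun n σ i = (σ i : ℕ) := by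
  unfold permFun
  rw [dif_pos i.2]

lemma strictMono_gap {n N : ℕ} {b : Fin n → Fin N} (hb : StrictMono b) {i : ℕ} (hi : i < n) {j : ℕ}
    (hij : i ≤ j) (hj : j < n) : (b ⟨i, hi⟩ : ℕ) + j ≤ b ⟨j, hj⟩ + i := by
  induction j, hij using Nat.le_induction with
  | base => omega
  | succ j hij ih =>
    have h1 := ih (by omega)
    have h2 : b ⟨j, by omega⟩ < b ⟨j + 1, hj⟩ := hb (by simp)
    rw [Fin.lt_def] at h2
    omega

lemma card_strictMono_fin (n N : ℕ) :
    ((univ : Finset (Fin n → Fin N)).filter (fun b => StrictMono b)).card = N.choose n := by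
  have h : N.choose n = (Finset.powersetCard n (univ : Finset (Fin N))).card := by simp
  rw [h]
  apply Finset.card_bij (fun b _ => univ.image b)
  · intro b hb
    have hb' := (mem_filter.1 hb).2
    rw [mem_powersetCard]
    refine ⟨subset_univ _, ?_⟩
    rw [card_image_of_injective _ hb'.injective]
    simp
  · intro b hb c hc h
    have hb' : StrictMono b := (mem_filter.1 hb).2
    have hc' : StrictMono c := (mem_filter.1 hc).2
    rw [← hb'.range_inj hc']
    have := congrArg (fun s : Finset (Fin N) => (s : Set (Fin N))) h
    simpa using this
  · intro s hs
    rw [mem_powersetCard] at hs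
    refine ⟨s.orderEmbOfFin hs.2, mem_filter.2 ⟨mem_univ _, (s.orderEmbOfFin hs.2).strictMono⟩, ?_⟩
    apply Finset.coe_injective
    simp

lemma card_Words (m n : ℕ) (hn : 1 ≤ n) (σ : Equiv.Perm (Fin n)) :
    (Words m n σ).card = (m + ascC n σ (n - 1)).choose n := by
  rw [← card_strictMono_fin]
  apply Finset.card_bij (fun a _ => fun i : Fin n => (⟨(a i : ℕ) + ascC n σ i, by
    have := (ascC_le n σ (show (i : ℕ) ≤ n - 1 by omega)).1
    omega⟩ : Fin (m + ascC n σ (n - 1))))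
  · intro a ha
    rw [mem_Words] at ha
    refine mem_filter.2 ⟨mem_univ _, ?_⟩
    intro i j hij
    obtain ⟨h1, h2⟩ := ha i j hij
    rw [Fin.lt_def]
    simp only
    have h3 := (ascC_le n σ (show (i : ℕ) ≤ j from hij.le)).1
    rw [Fin.le_def] at h1
    by_contra hc
    have h4 : a i = a j := Fin.ext (by omega)
    have h5 := ascC_eq_desc n σ (i := i) (j := j) hij j.2 (by omega)
    have h6 := h2 h4
    rw [permFun_fin, permFun_fin] at h5
    rw [Fin.lt_def] at h6
    omega
  · intro a _ b _ h
    funext i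
    have := congrFun h i
    simp only [Fin.mk.injEq] at this
    exact Fin.ext (by omega)
  · intro b hb
    have hb' : StrictMono b := (mem_filter.1 hb).2
    have hge : ∀ i : Fin n, ascC n σ i ≤ b i := by
      intro i
      have h1 := strictMono_gap hb' (i := 0) (by omega) (j := i) (by omega) i.2
      have h2 := (ascC_le n σ (show 0 ≤ (i : ℕ) by omega)).2
      rw [ascC_zero] at h2
      simp only [Fin.eta] at h1
      omega
    have hlt : ∀ i : Fin n, (b i : ℕ) - ascC n σ i < m := by
      intro i
      have h1 := strictMono_gap hb' (i := i) i.2 (j := n - 1) (by omega) (by omega)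
      have h2 := (ascC_le n σ (show (i : ℕ) ≤ n - 1 by omega)).2
      have h3 := (b ⟨n - 1, by omega⟩).2
      have h4 := hge i
      simp only [Fin.eta] at h1
      omega
    refine ⟨fun i => ⟨(b i : ℕ) - ascC n σ i, hlt i⟩, ?_, ?_⟩
    · rw [mem_Words]
      intro i j hij
      have hij' : (i : ℕ) < j := hij
      have h1 := strictMono_gap hb' (i := i) i.2 (j := j) hij'.le j.2
      have h2 := (ascC_le n σ (show (i : ℕ) ≤ j from hij'.le))
      have h3 := hge i
      have h4 := hge j
      simp only [Fin.eta] at h1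
      constructor
      · rw [Fin.le_def]; simp only; omega
      · intro h
        simp only [Fin.mk.injEq] at h
        have h5 := ascC_eq_asc n σ (i := i) (j := j) hij' j.2 (by omega)
        rw [permFun_fin, permFun_fin] at h5
        exact h5
    · funext i
      apply Fin.ext
      have := hge i
      simp only
      omega

lemma SymMat_card_eq (m n : ℕ) (hn : 1 ≤ n) :
    (SymMat m n).card = ∑ σ ∈ Invols n, (m + (n - 1 - desStat n σ)).choose n := by
  rw [← sum_card_Words]
  apply Finset.sum_congr rfl
  intro σ _
  rw [card_Words m n hn]
  have := desStat_add_ascC n σ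
  congr 2
  omega
open PowerSeries in
/-- generating series of symmetric matrices -/
def serA (n : ℕ) : PowerSeries ℤ := PowerSeries.mk (fun m => ((SymMat m n).card : ℤ))

open PowerSeries in
/-- generating polynomial of descents -/
def serE (n : ℕ) : PowerSeries ℤ := ∑ σ ∈ Invols n, (X : PowerSeries ℤ) ^ (desStat n σ + 1)

open PowerSeries in
lemma serA_mul (n : ℕ) (hn : 1 ≤ n) : serA n * (1 - X) ^ (n + 1) = serE n := by
  have h : serA n = serE n * PowerSeries.mk (fun k => ((n + k).choose n : ℤ)) := by
    unfold serE
    rw [Finset.sum_mul]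
    ext m
    rw [map_sum]
    simp only [serA, coeff_mk]
    rw [SymMat_card_eq m n hn]
    push_cast
    apply Finset.sum_congr rfl
    intro σ _
    have hd := desStat_add_ascC n σ
    rw [mul_comm, coeff_mul_X_pow']
    split_ifs with h
    · rw [coeff_mk]
      congr 2
      omega
    · rw [Nat.choose_eq_zero_of_lt (by omega)]
      simp
  rw [h, mul_assoc, PowerSeries.mk_add_choose_mul_one_sub_pow_eq_one, mul_one]

open PowerSeries in
lemma coeff_serE_zero (n : ℕ) : coeff 0 (serE n) = 0 := by
  unfold serE
  rw [map_sum]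
  apply Finset.sum_eq_zero
  intro σ _
  rw [coeff_X_pow, if_neg (by omega)]

open PowerSeries in
lemma coeff_serE_succ (n k : ℕ) : coeff (k + 1) (serE n) = (invDesCount n k : ℤ) := by
  unfold serE invDesCount
  rw [map_sum, Finset.card_filter]
  push_cast
  apply Finset.sum_congr rfl
  intro σ _
  rw [coeff_X_pow]
  congr 1
  apply propext
  constructor <;> intro h <;> omega

open PowerSeries in
/-- Euler operator -/
def theta (f : PowerSeries ℤ) : PowerSeries ℤ := X * PowerSeries.derivative ℤ f

open PowerSeries in
lemma coeff_theta (f : PowerSeries ℤ) (k : ℕ) : coeff k (theta f) = k * coeff k f := by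
  unfold theta
  cases k with
  | zero => simp
  | succ k =>
    rw [coeff_succ_X_mul, coeff_derivative]
    push_cast
    ring

open PowerSeries in
lemma theta_mul_pow (f : PowerSeries ℤ) (n : ℕ) :
    (1 - X) * theta (f * (1 - X) ^ (n + 1))
      = theta f * (1 - X) ^ (n + 2) - ((n : PowerSeries ℤ) + 1) * X * (f * (1 - X) ^ (n + 1)) := by
  unfold theta
  rw [Derivation.leibniz, derivative_pow]
  simp only [map_sub, derivative_X, smul_eq_mul, Nat.add_sub_cancel, derivative_one]
  push_cast
  ring

open PowerSeries in
lemma serA_rec (p : ℕ) : ((p : PowerSeries ℤ) + 2) * serA (p + 2)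
    = theta (serA (p + 1)) + theta (theta (serA p)) + (p : PowerSeries ℤ) * serA p := by
  ext m
  have e1 : ((p : PowerSeries ℤ) + 2) = C ((p : ℤ) + 2) := by simp
  have e2 : (p : PowerSeries ℤ) = C (p : ℤ) := by simp
  rw [e1, e2]
  simp only [map_add (coeff m), coeff_C_mul, coeff_theta, serA, coeff_mk]
  have := SymMat_rec m p
  zify at this
  linear_combination this

open PowerSeries in
lemma serE_rec (p : ℕ) (hp : 1 ≤ p) : ∃ G : PowerSeries ℤ,
    G = (1 - X) * theta (serE p) + ((p : PowerSeries ℤ) + 1) * X * serE p ∧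
    ((p : PowerSeries ℤ) + 2) * serE (p + 2)
    = (1 - X) * theta (serE (p + 1)) + ((p : PowerSeries ℤ) + 2) * X * serE (p + 1)
      + (1 - X) * theta G + ((p : PowerSeries ℤ) + 2) * X * G
      + (p : PowerSeries ℤ) * (1 - X) ^ 2 * serE p := by
  refine ⟨_, rfl, ?_⟩
  have hG : (1 - X) * theta (serE p) + ((p : PowerSeries ℤ) + 1) * X * serE p
      = theta (serA p) * (1 - X) ^ (p + 1 + 1) := by
    rw [← serA_mul p hp, theta_mul_pow]; ring
  have h1 := theta_mul_pow (theta (serA p)) (p + 1)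
  have h2 := theta_mul_pow (serA (p + 1)) (p + 1)
  have h3 := serA_rec p
  rw [hG, h1, ← serA_mul (p + 1) (by omega), h2, ← serA_mul (p + 2) (by omega), ← serA_mul p hp]
  push_cast
  linear_combination (1 - X) ^ (p + 2 + 1) * h3

/-- integer-indexed descent numbers -/
def bb (n : ℕ) (k : ℤ) : ℤ := if k < 0 then 0 else (invDesCount n k.toNat : ℤ)

open PowerSeries in
lemma bb_natCast (n k : ℕ) : bb n ((k : ℤ) - 1) = coeff k (serE n) := by
  cases k with
  | zero => simp [bb, coeff_serE_zero]
  | succ k =>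
    rw [coeff_serE_succ]
    have : ((k + 1 : ℕ) : ℤ) - 1 = (k : ℤ) := by push_cast; ring
    rw [this]
    simp [bb]

lemma bb_neg (n : ℕ) (k : ℤ) (h : k < 0) : bb n k = 0 := by simp [bb, h]

lemma bb_nonneg (n : ℕ) (k : ℤ) : 0 ≤ bb n k := by
  unfold bb; split_ifs <;> positivity

open PowerSeries in
lemma coeff_X_mul_int (f : PowerSeries ℤ) (g : ℤ → ℤ) (hg : ∀ k < 0, g k = 0)
    (h : ∀ k : ℕ, coeff k f = g k) (k : ℕ) : coeff k (X * f) = g ((k : ℤ) - 1) := by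
  cases k with
  | zero => rw [coeff_zero_X_mul]; exact (hg _ (by norm_num)).symm
  | succ k =>
    rw [coeff_succ_X_mul, h]; congr 1; push_cast; ring

open PowerSeries in
lemma bb_rec (p : ℕ) (hp : 1 ≤ p) (k : ℤ) :
    ((p : ℤ) + 2) * bb (p + 2) k = (k + 1) * bb (p + 1) k + (p + 2 - k) * bb (p + 1) (k - 1)
      + p * (bb p k - 2 * bb p (k - 1) + bb p (k - 2))
      + (k + 1) * ((k + 1) * bb p k + (p + 1 - k) * bb p (k - 1))
      + (p + 2 - k) * (k * bb p (k - 1) + (p + 2 - k) * bb p (k - 2)) := by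
  rcases lt_or_ge k 0 with hk | hk
  · rw [bb_neg _ _ hk, bb_neg _ _ hk, bb_neg _ (k - 1) (by omega), bb_neg _ k hk,
      bb_neg _ (k - 1) (by omega), bb_neg _ (k - 2) (by omega)]
    ring
  obtain ⟨K, hK⟩ : ∃ K : ℕ, (K : ℤ) = k + 1 := ⟨(k + 1).toNat, by omega⟩
  obtain ⟨G, hG, hR⟩ := serE_rec p hp
  have hE : ∀ n, ∀ K : ℕ, coeff K (serE n) = (fun j : ℤ => bb n (j - 1)) K :=
    fun n K => (bb_natCast n K).symm
  have hEn : ∀ n, ∀ j < (0 : ℤ), (fun j : ℤ => bb n (j - 1)) j = 0 :=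
    fun n j hj => bb_neg _ _ (by omega)
  have hu : ∀ (f : PowerSeries ℤ) (g : ℤ → ℤ) (_ : ∀ k < 0, g k = 0)
      (_ : ∀ k : ℕ, coeff k f = g k) (k : ℕ),
      coeff k ((1 - X) * f) = (fun j => g j - g (j - 1)) (k : ℤ) := by
    intro f g hg h k
    rw [sub_mul, one_mul, map_sub, coeff_X_mul_int f g hg h, h]
  have hX := coeff_X_mul_int
  have hth : ∀ (f : PowerSeries ℤ) (g : ℤ → ℤ)
      (_ : ∀ k : ℕ, coeff k f = g k) (k : ℕ),
      coeff k (theta f) = (fun j => j * g j) (k : ℤ) := by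
    intro f g h k
    rw [coeff_theta, h]
  have hc : ∀ (c : ℤ) (f : PowerSeries ℤ) (k : ℕ), coeff k (C c * f) = c * coeff k f :=
    fun c f k => coeff_C_mul k f c
  have e0 : (p : PowerSeries ℤ) = C (p : ℤ) := by simp
  have e1 : ((p : PowerSeries ℤ) + 1) = C ((p : ℤ) + 1) := by simp
  have e2 : ((p : PowerSeries ℤ) + 2) = C ((p : ℤ) + 2) := by simp
  let g : ℤ → ℤ := fun j => j * bb p (j - 1) + (p + 2 - j) * bb p (j - 2)
  have hg : ∀ K : ℕ, coeff K G = g K := by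
    intro K
    rw [hG, map_add, e1, mul_assoc, hc, hX _ _ (hEn p) (hE p),
      hu _ (fun j => j * bb p (j - 1)) (by intro j hj; rw [bb_neg _ _ (by omega)]; ring)
        (hth (serE p) (fun j => bb p (j - 1)) (hE p))]
    simp only [g]
    rw [show (K : ℤ) - 1 - 1 = K - 2 by ring]
    ring
  have hgn : ∀ j < (0 : ℤ), g j = 0 := by
    intro j hj
    simp only [g]
    rw [bb_neg _ _ (by omega), bb_neg _ _ (by omega)]; ring
  have hR' := congrArg (coeff K) hR
  rw [e2, e0, hc, map_add, map_add, map_add, map_add, mul_assoc, hc, hX _ _ (hEn _) (hE _),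
    hu _ (fun j => j * bb (p + 1) (j - 1))
      (by intro j hj; rw [bb_neg _ _ (by omega)]; ring) (hth (serE (p + 1)) (fun j => bb (p + 1) (j - 1)) (hE (p + 1))),
    mul_assoc, hc, hX _ _ hgn hg,
    hu _ (fun j => j * g j) (by intro j hj; rw [hgn _ hj]; ring) (hth G g hg),
    mul_assoc, hc, pow_two, mul_assoc,
    hu _ (fun j => bb p (j - 1) - bb p (j - 1 - 1))
      (by intro j hj; rw [bb_neg _ _ (by omega), bb_neg _ _ (by omega)]; ring)
      (hu _ _ (hEn p) (hE p)), hE] at hR'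
  simp only [g, hK] at hR'
  rw [show k + 1 - 1 = k by ring, show k - 2 = k - 1 - 1 by ring] at *
  rw [show k + 1 - 2 = k - 1 by ring] at hR'
  rw [hR']
  ring

lemma bb_ge (n : ℕ) (hn : 1 ≤ n) (k : ℤ) (h : (n : ℤ) ≤ k) : bb n k = 0 := by
  unfold bb
  rw [if_neg (by omega)]
  unfold invDesCount
  rw [Nat.cast_eq_zero, Finset.card_eq_zero, Finset.filter_eq_empty_iff]
  intro σ _ hσ
  have := desStat_add_ascC n σ
  omega

lemma bb_zero_pos (n : ℕ) : 0 < bb n 0 := by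
  unfold bb
  rw [if_neg (by omega)]
  unfold invDesCount
  rw [Nat.cast_pos, Finset.card_pos]
  refine ⟨1, ?_⟩
  rw [Finset.mem_filter]
  refine ⟨by simp [Invols], ?_⟩
  unfold desStat
  simp only [Int.toNat_zero, Finset.card_eq_zero]
  unfold DesSet
  rw [Finset.filter_eq_empty_iff]
  intro i hi
  rw [mem_Icc] at hi
  unfold permFun
  rw [dif_pos (by omega), dif_pos (by omega)]
  simp

lemma base_vals : invDesCount 2 0 = 1 ∧ invDesCount 2 1 = 1 := by
  constructor <;> decide

lemma bb_symm (n : ℕ) (hn : 1 ≤ n) : ∀ k : ℤ, bb n k = bb n (n - 1 - k) := by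
  induction n using Nat.strong_induction_on with
  | _ n ih =>
    intro k
    by_cases hk : k < 0 ∨ (n : ℤ) ≤ k
    · rcases hk with hk | hk
      · rw [bb_neg _ _ hk, bb_ge _ hn _ (by omega)]
      · rw [bb_ge _ hn _ hk, bb_neg _ _ (by omega)]
    push Not at hk
    by_cases h1 : n = 1
    · subst h1; congr 1; push_cast; omega
    by_cases h2 : n = 2
    · subst h2
      have e0 : bb 2 0 = 1 := by simp [bb, base_vals]
      have e1 : bb 2 1 = 1 := by simp [bb, base_vals]
      have : k = 0 ∨ k = 1 := by omega
      rcases this with rfl | rfl <;> norm_num [e0, e1]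
    obtain ⟨p, rfl⟩ : ∃ p, n = p + 2 := ⟨n - 2, by omega⟩
    have hp : 1 ≤ p := by omega
    have r1 := bb_rec p hp k
    have r2 := bb_rec p hp (((p + 2 : ℕ) : ℤ) - 1 - k)
    have a := fun j => ih p (by omega) hp j
    have b := fun j => ih (p + 1) (by omega) (by omega) j
    rw [b (((p + 2 : ℕ) : ℤ) - 1 - k), b (((p + 2 : ℕ) : ℤ) - 1 - k - 1),
      a (((p + 2 : ℕ) : ℤ) - 1 - k), a (((p + 2 : ℕ) : ℤ) - 1 - k - 1),
      a (((p + 2 : ℕ) : ℤ) - 1 - k - 2)] at r2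
    push_cast at r2 ⊢
    have x1 : (p : ℤ) + 1 - 1 - (p + 2 - 1 - k) = k - 1 := by ring
    have x2 : (p : ℤ) + 1 - 1 - (p + 2 - 1 - k - 1) = k := by ring
    have x3 : (p : ℤ) - 1 - (p + 2 - 1 - k) = k - 2 := by ring
    have x4 : (p : ℤ) - 1 - (p + 2 - 1 - k - 1) = k - 1 := by ring
    have x5 : (p : ℤ) - 1 - (p + 2 - 1 - k - 2) = k := by ring
    rw [x1, x2, x3, x4, x5] at r2
    have hne : ((p : ℤ) + 2) ≠ 0 := by positivity
    apply mul_left_cancel₀ hne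
    rw [r1, r2]
    ring

/-- differences -/
def dd (n : ℕ) (k : ℤ) : ℤ := bb n k - bb n (k - 1)

lemma dd_anti (n : ℕ) (hn : 1 ≤ n) (k : ℤ) : dd n k = - dd n (n - k) := by
  unfold dd
  rw [bb_symm n hn k, bb_symm n hn (k - 1)]
  rw [show (n : ℤ) - 1 - (k - 1) = n - k by ring, show (n : ℤ) - 1 - k = n - k - 1 by ring]
  ring

lemma dd_rec (p : ℕ) (hp : 1 ≤ p) (k : ℤ) :
    ((p : ℤ) + 2) * dd (p + 2) k = (k + 1) * dd (p + 1) k + (p + 3 - k) * dd (p + 1) (k - 1)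
      + ((k + 1) ^ 2 + p) * dd p k + (2 * k * (p + 2 - k) - p + 2) * dd p (k - 1)
      + ((p + 3 - k) ^ 2 + p) * dd p (k - 2) := by
  unfold dd
  have r1 := bb_rec p hp k
  have r2 := bb_rec p hp (k - 1)
  rw [show k - 1 - 1 = k - 2 by ring, show k - 1 - 2 = k - 3 by ring] at *
  rw [show k - 2 - 1 = k - 3 by ring]
  linear_combination r1 - r2

lemma dd_zero (n : ℕ) : 0 < dd n 0 := by
  unfold dd
  rw [bb_neg n (0 - 1) (by omega), sub_zero]
  exact bb_zero_pos n

lemma dd_neg (n : ℕ) (k : ℤ) (h : k < 0) : dd n k = 0 := by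
  unfold dd
  rw [bb_neg n _ h, bb_neg n _ (by omega), sub_zero]

lemma dd_31 : dd 3 1 ≤ 3 * dd 3 0 := by
  have r0 := dd_rec 1 (by norm_num) 0
  have r1 := dd_rec 1 (by norm_num) 1
  have h21 := dd_anti 2 (by norm_num) 1
  have h11 := dd_anti 1 (by norm_num) 1
  have h20 : dd 2 0 = 1 := by simp [dd, bb, base_vals]
  norm_num at r0 r1 h21 h11
  have n1 := dd_neg 1 (-1) (by norm_num)
  have n2 := dd_neg 1 (-2) (by norm_num)
  have n3 := dd_neg 2 (-1) (by norm_num)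
  have := dd_zero 1
  rw [n1, n2, n3] at r0
  rw [n1] at r1
  have h21' : dd 2 1 = 0 := by omega
  rw [h21', h20, h11] at r1
  rw [h20] at r0
  omega

lemma dd_main (n : ℕ) (hn : 1 ≤ n) :
    ∀ k : ℤ, 2 * k ≤ n → 0 ≤ dd n k ∧ (0 ≤ k → 2 * k < n → 0 < dd n k) := by
  induction n using Nat.strong_induction_on with
  | _ n ih =>
    intro k hk
    rcases lt_trichotomy k 0 with h0 | h0 | h0
    · rw [dd_neg n k h0]
      exact ⟨le_refl _, fun h => by omega⟩
    · subst h0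
      exact ⟨(dd_zero n).le, fun _ _ => dd_zero n⟩
    rcases hk.lt_or_eq with hk' | hk'
    swap
    · have := dd_anti n hn k
      rw [show (n : ℤ) - k = k by omega] at this
      exact ⟨by omega, fun _ h => by omega⟩
    suffices h : 0 < dd n k from ⟨h.le, fun _ _ => h⟩
    obtain ⟨p, rfl⟩ : ∃ p, n = p + 2 := ⟨n - 2, by omega⟩
    have hp : 1 ≤ p := by omega
    push_cast at hk'
    have r := dd_rec p hp k
    have i1 := (ih (p + 1) (by omega) (by omega) k (by push_cast; omega)).1
    have i2 := (ih (p + 1) (by omega) (by omega) (k - 1) (by push_cast; omega)).2 (by omega)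
      (by push_cast; omega)
    have i4 := (ih p (by omega) hp (k - 1) (by omega)).1
    have i5 := (ih p (by omega) hp (k - 2) (by omega)).1
    have t1 : 0 ≤ (k + 1) * dd (p + 1) k := mul_nonneg (by omega) i1
    have t2 : 0 < (p + 3 - k) * dd (p + 1) (k - 1) := mul_pos (by omega) i2
    have t5 : 0 ≤ (((p : ℤ) + 3 - k) ^ 2 + p) * dd p (k - 2) := mul_nonneg (by positivity) i5
    have key : 0 < ((p : ℤ) + 2) * dd (p + 2) k := by
      by_cases hc : 2 * k ≤ p
      · have i3 := (ih p (by omega) hp k hc).1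
        have t3 : 0 ≤ ((k + 1) ^ 2 + (p : ℤ)) * dd p k := mul_nonneg (by positivity) i3
        have t4 : 0 ≤ (2 * k * ((p : ℤ) + 2 - k) - p + 2) * dd p (k - 1) := by
          apply mul_nonneg _ i4
          nlinarith
        linarith
      · have hpk : (p : ℤ) = 2 * k - 1 := by omega
        have h3 := dd_anti p hp k
        rw [show (p : ℤ) - k = k - 1 by omega] at h3
        rw [h3] at r
        have r' : ((p : ℤ) + 2) * dd (p + 2) k
            = (k + 1) * dd (p + 1) k + (p + 3 - k) * dd (p + 1) (k - 1)
            + (k - 1) * (k - 3) * dd p (k - 1) + ((p + 3 - k) ^ 2 + p) * dd p (k - 2) := by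
          rw [r, hpk]; ring
        by_cases h2 : k = 2
        · subst h2
          have : p = 3 := by omega
          subst this
          have := dd_31
          norm_num at r' t1 t2 ⊢
          have := dd_zero 3
          omega
        · have t6 : 0 ≤ (k - 1) * (k - 3) * dd p (k - 1) := by
            apply mul_nonneg _ i4
            rcases lt_or_ge k 2 with h | h
            · have : k = 1 := by omega
              subst this; norm_num
            · exact mul_nonneg (by omega) (by omega)
          linarith
    exact (mul_pos_iff_of_pos_left (by positivity)).1 key
theorem involution_descents_partially_unimodal (n : ℕ) (hn : 1 ≤ n)
    (k : ℕ) (hk1 : 1 ≤ k) (hk2 : (k : ℝ) ≤ 0.175 * (n : ℝ) ^ (0.931 : ℝ)) :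
    invDesCount n (k - 1) < invDesCount n k ∧
      invDesCount n (n - k) < invDesCount n (n - 1 - k) := by
  have hn1 : (1 : ℝ) ≤ n := by exact_mod_cast hn
  have h1 : (n : ℝ) ^ (0.931 : ℝ) ≤ n := by
    calc (n : ℝ) ^ (0.931 : ℝ) ≤ (n : ℝ) ^ (1 : ℝ) :=
          Real.rpow_le_rpow_of_exponent_le hn1 (by norm_num)
      _ = n := Real.rpow_one _
  have h2 : 2 * k < n := by
    have : (2 : ℝ) * k < n := by linarith
    exact_mod_cast this
  have hpos := (dd_main n hn k (by omega)).2 (by omega) (by omega)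
  unfold dd at hpos
  have e : ∀ j : ℕ, bb n (j : ℤ) = invDesCount n j := by
    intro j; simp [bb]
  have s1 := bb_symm n hn k
  have s2 := bb_symm n hn ((k : ℤ) - 1)
  rw [show (n : ℤ) - 1 - k = ((n - 1 - k : ℕ) : ℤ) by omega] at s1
  rw [show (n : ℤ) - 1 - ((k : ℤ) - 1) = ((n - k : ℕ) : ℤ) by omega] at s2
  have e1 : bb n ((k : ℤ) - 1) = invDesCount n (k - 1) := by
    rw [show (k : ℤ) - 1 = ((k - 1 : ℕ) : ℤ) by omega, e]
  rw [e, e1] at hpos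
  rw [e, e] at s1
  rw [e1, e] at s2
  omega
end
end

section
/- For every even integer n ≥ 2 with n/2 even (resp. n/2 odd), the sequence of coefficients of the even (resp. odd) powers of q in 𝒥𝒟_n(q) = Σ_{π∈J_n^D} q^{inv_D(π)} is symmetric and unimodal, and the coefficients of the odd (resp. even) powers of q are all zero. -/
noncomputable section
open Finset Polynomial

/-- Signed permutations of `{±1,…,±n}`, modeled as permutations `π` of `ℤ` satisfying
`π(-a) = -π(a)` for all `a` and fixing every integer of absolute value greater than `n`. -/
def SignedPerms (n : ℕ) : Set (Equiv.Perm ℤ) :=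
  {π | (∀ a : ℤ, π (-a) = -π a) ∧ ∀ a : ℤ, (n : ℤ) < |a| → π a = a}

/-- The set of involutions among the signed permutations: `I_n^B`. -/
def InvB (n : ℕ) : Set (Equiv.Perm ℤ) := {π ∈ SignedPerms n | π * π = 1}

/-- The number of inversions of the window `(π(1),…,π(n))`. -/
def winInv (n : ℕ) (π : Equiv.Perm ℤ) : ℕ :=
  (((Finset.Icc (1 : ℤ) n) ×ˢ (Finset.Icc (1 : ℤ) n)).filter
    (fun p => p.1 < p.2 ∧ π p.2 < π p.1)).card

/-- `N_1(π) = |{1 ≤ i ≤ n : π(i) < 0}|`. -/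
def negOnes (n : ℕ) (π : Equiv.Perm ℤ) : ℕ :=
  ((Finset.Icc (1 : ℤ) n).filter (fun i => π i < 0)).card

/-- `N_2(π) = |{1 ≤ i < j ≤ n : π(i) + π(j) < 0}|`. -/
def negPairs (n : ℕ) (π : Equiv.Perm ℤ) : ℕ :=
  (((Finset.Icc (1 : ℤ) n) ×ˢ (Finset.Icc (1 : ℤ) n)).filter
    (fun p => p.1 < p.2 ∧ π p.1 + π p.2 < 0)).card

/-- The type-B inversion statistic `inv_B = inv + N_1 + N_2`. -/
def invBStat (n : ℕ) (π : Equiv.Perm ℤ) : ℕ := winInv n π + negOnes n π + negPairs n π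

/-- The type-D inversion statistic `inv_D = inv + N_2`. -/
def invDStat (n : ℕ) (π : Equiv.Perm ℤ) : ℕ := winInv n π + negPairs n π

/-- `I_n^D`: signed involutions with an even number of negative window entries. -/
def InvD (n : ℕ) : Set (Equiv.Perm ℤ) := {π ∈ InvB n | Even (negOnes n π)}

/-- `I_n^O = I_n^B \ I_n^D`. -/
def InvO (n : ℕ) : Set (Equiv.Perm ℤ) := InvB n \ InvD n

/-- `J_n^D`: elements of `I_n^D` with `π(i) ≠ ±i` for all `1 ≤ i ≤ n`. -/
def JD (n : ℕ) : Set (Equiv.Perm ℤ) :=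
  {π ∈ InvD n | ∀ i ∈ Finset.Icc (1 : ℤ) n, π i ≠ i ∧ π i ≠ -i}

/-- `Inv_n^B(q) = Σ_{π ∈ I_n^B} q^{inv_B(π)}`. -/
def InvBPoly (n : ℕ) : Polynomial ℚ := ∑ᶠ π ∈ InvB n, Polynomial.X ^ invBStat n π

/-- `Inv_n^D(q) = Σ_{π ∈ I_n^D} q^{inv_D(π)}`. -/
def InvDPoly (n : ℕ) : Polynomial ℚ := ∑ᶠ π ∈ InvD n, Polynomial.X ^ invDStat n π

/-- `Inv_n^O(q) = Σ_{π ∈ I_n^O} q^{inv_D(π)}`. -/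
def InvOPoly (n : ℕ) : Polynomial ℚ := ∑ᶠ π ∈ InvO n, Polynomial.X ^ invDStat n π

/-- `𝒥𝒟_n(q) = Σ_{π ∈ J_n^D} q^{inv_D(π)}`. -/
def JDPoly (n : ℕ) : Polynomial ℚ := ∑ᶠ π ∈ JD n, Polynomial.X ^ invDStat n π

/-- Fixed-point-free signed involutions supported on `±S`. -/
def JS (S : Finset ℤ) : Set (Equiv.Perm ℤ) :=
  {π | (∀ a : ℤ, π (-a) = -π a) ∧ (∀ a : ℤ, |a| ∉ S → π a = a) ∧ (∀ a, π (π a) = a) ∧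
    ∀ i ∈ S, π i ≠ i ∧ π i ≠ -i}

/-- local contribution to the type-D inversion statistic -/
def dTerm (π : ℤ → ℤ) (i k : ℤ) : ℕ :=
  (if i < k ∧ π k < π i then 1 else 0) + (if i < k ∧ π i + π k < 0 then 1 else 0)

/-- type-D inversion statistic on `S` -/
def dStat (S : Finset ℤ) (π : ℤ → ℤ) : ℕ := ∑ i ∈ S, ∑ k ∈ S, dTerm π i k

lemma invDStat_eq (n : ℕ) (π : Equiv.Perm ℤ) : invDStat n π = dStat (Finset.Icc 1 (n : ℤ)) π := by
  unfold invDStat dStat dTerm winInv negPairs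
  rw [Finset.card_filter, Finset.card_filter, Finset.sum_product, Finset.sum_product,
    ← Finset.sum_add_distrib]
  refine Finset.sum_congr rfl fun i _ => ?_
  rw [← Finset.sum_add_distrib]

lemma JS_abs_mem {S : Finset ℤ} {π : Equiv.Perm ℤ} (h : π ∈ JS S) {i : ℤ} (hi : |i| ∈ S) :
    |π i| ∈ S := by
  by_contra hc
  obtain ⟨h1, h2, h3, h4⟩ := h
  have := h2 _ hc
  rw [h3] at this
  rw [← this] at hc
  exact hc hi

lemma JS_abs_abs {S : Finset ℤ} {π : Equiv.Perm ℤ} (h : π ∈ JS S) (i : ℤ) :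
    |π (|π i|)| = |i| := by
  obtain ⟨h1, h2, h3, h4⟩ := h
  rcases abs_choice (π i) with h | h <;> rw [h]
  · rw [h3]
  · rw [h1, h3, abs_neg]

lemma JS_sum {T : Finset ℤ} {ρ : Equiv.Perm ℤ} (h : ρ ∈ JS T) (hpos : ∀ i ∈ T, 0 < i)
    (f : ℤ → ℕ) : ∑ i ∈ T, f (|ρ i|) = ∑ i ∈ T, f i := by
  refine Finset.sum_nbij' (fun i => |ρ i|) (fun i => |ρ i|) ?_ ?_ ?_ ?_ ?_
  · intro i hi
    exact JS_abs_mem h (by rwa [abs_of_pos (hpos i hi)])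
  · intro i hi
    exact JS_abs_mem h (by rwa [abs_of_pos (hpos i hi)])
  · intro i hi
    simp only [JS_abs_abs h, abs_of_pos (hpos i hi)]
  · intro i hi
    simp only [JS_abs_abs h, abs_of_pos (hpos i hi)]
  · intro i hi
    rfl

lemma JD_eq (n : ℕ) : JD n = JS (Finset.Icc 1 (n : ℤ)) := by
  ext π
  constructor
  · rintro ⟨⟨⟨⟨h1, h2⟩, h3⟩, -⟩, h4⟩
    refine ⟨h1, ?_, fun a => by simpa using congrArg (fun f => f a) h3, h4⟩
    intro a ha
    rcases eq_or_ne a 0 with rfl | h0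
    · have := h1 0
      simp only [neg_zero] at this
      omega
    · apply h2
      have := abs_pos.2 h0
      simp only [Finset.mem_Icc, not_and_or, not_le] at ha
      omega
  · intro h
    obtain ⟨h1, h2, h3, h4⟩ := id h
    refine ⟨⟨⟨⟨h1, ?_⟩, ?_⟩, ?_⟩, h4⟩
    · intro a ha
      apply h2
      simp only [Finset.mem_Icc, not_and_or, not_le]
      omega
    · ext a; simp [h3]
    · have hc : (((Finset.Icc (1 : ℤ) n).filter (fun i => π i < 0)).card : ZMod 2) = 0 := by
        rw [Finset.card_eq_sum_ones, Nat.cast_sum]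
        refine Finset.sum_involution (fun i _ => -π i) ?_ ?_ ?_ ?_
        · intro i hi; decide
        · intro i hi _ hh
          rw [Finset.mem_filter] at hi
          have := h4 i hi.1
          omega
        · intro i hi
          rw [Finset.mem_filter] at hi ⊢
          have hp := Finset.mem_Icc.1 hi.1
          have := JS_abs_mem h (i := i) (by rw [abs_of_pos (by omega)]; exact hi.1)
          rw [abs_of_neg hi.2] at this
          refine ⟨this, ?_⟩
          rw [h1, h3]; omega
        · intro i hi
          simp only [h1, h3, neg_neg]
      exact (ZMod.natCast_eq_zero_iff_even).1 hc

/-- The signed transposition exchanging `n` and `e`. -/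
def sigF (n e : ℤ) (a : ℤ) : ℤ :=
  if a = n then e else if a = e then n else if a = -n then -e else if a = -e then -n else a

/-- Signed transposition as a permutation. -/
def sig (n e : ℤ) (h : Function.Involutive (sigF n e)) : Equiv.Perm ℤ :=
  Function.Involutive.toPerm _ h

lemma sigF_invol {n e : ℤ} (hn : 0 < n) (he : e ≠ 0) (h1 : e < n) (h2 : -n < e) :
    Function.Involutive (sigF n e) := by
  intro a
  unfold sigF
  split_ifs <;> omega

lemma sigF_odd {n e : ℤ} (hn : 0 < n) (he : e ≠ 0) (h1 : e < n) (h2 : -n < e) (a : ℤ) :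
    sigF n e (-a) = - sigF n e a := by
  unfold sigF
  split_ifs <;> omega

lemma sigF_off {n e a : ℤ} (h1 : |a| ≠ |n|) (h2 : |a| ≠ |e|) : sigF n e a = a := by
  rw [Ne, abs_eq_abs, not_or] at h1 h2
  unfold sigF
  rw [if_neg h1.1, if_neg h2.1, if_neg h1.2, if_neg h2.2]

lemma sig_mul_mem {T : Finset ℤ} {n e : ℤ} (hn : 0 < n) (he : e ≠ 0) (h1 : e < n) (h2 : -n < e)
    (hT : ∀ i ∈ T, 0 < i ∧ i < n ∧ i ≠ |e|) (h : Function.Involutive (sigF n e))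
    {ρ : Equiv.Perm ℤ} (hρ : ρ ∈ JS T) : sig n e h * ρ ∈ JS (insert n (insert |e| T)) := by
  obtain ⟨r1, r2, r3, r4⟩ := id hρ
  have hnT : |n| ∉ T := fun hh => by
    rw [abs_of_pos hn] at hh; have := (hT _ hh).2.1; omega
  have heT : |e| ∉ T := fun hh => (hT _ hh).2.2 rfl
  have key : ∀ a, |a| ∈ T → sigF n e (ρ a) = ρ a := by
    intro a ha
    have := JS_abs_mem hρ ha
    exact sigF_off (fun hh => hnT (hh ▸ this)) (fun hh => heT (hh ▸ this))
  have key2 : ∀ a, |a| ∉ T → |sigF n e a| ∉ T := by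
    intro a ha
    unfold sigF
    split_ifs <;> simpa only [abs_neg]
  refine ⟨?_, ?_, ?_, ?_⟩
  · intro a
    change sigF n e (ρ (-a)) = - sigF n e (ρ a)
    rw [r1, sigF_odd hn he h1 h2]
  · intro a ha
    simp only [Finset.mem_insert, not_or] at ha
    change sigF n e (ρ a) = a
    rw [r2 a ha.2.2]
    exact sigF_off (by rw [abs_of_pos hn]; exact ha.1) ha.2.1
  · intro a
    change sigF n e (ρ (sigF n e (ρ a))) = a
    by_cases ha : |a| ∈ T
    · rw [key a ha, r3, ← r3 a, key, r3]
      exact JS_abs_mem hρ ha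
    · rw [r2 a ha, r2 _ (key2 a ha), h]
  · intro i hi
    change sigF n e (ρ i) ≠ i ∧ sigF n e (ρ i) ≠ -i
    by_cases hiT : i ∈ T
    · rw [key i (by rwa [abs_of_pos (hT i hiT).1])]
      exact r4 i hiT
    · have hi' : i = n ∨ i = |e| := by
        simp only [Finset.mem_insert] at hi; tauto
      have hr : ρ i = i := r2 i (by rcases hi' with rfl | rfl <;> simpa using ‹_›)
      rw [hr]
      rcases hi' with rfl | rfl
      · simp only [sigF, if_true]; omega
      · rcases abs_choice e with hh | hh <;> rw [hh] <;> unfold sigF <;> constructor <;>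
          split_ifs <;> omega

lemma sig_mul_apply {T : Finset ℤ} {n e : ℤ} (hn : 0 < n)
    (hT : ∀ i ∈ T, 0 < i ∧ i < n ∧ i ≠ |e|) (h : Function.Involutive (sigF n e))
    {ρ : Equiv.Perm ℤ} (hρ : ρ ∈ JS T) : (sig n e h * ρ) n = e := by
  obtain ⟨r1, r2, r3, r4⟩ := id hρ
  have hnT : |n| ∉ T := fun hh => by
    rw [abs_of_pos hn] at hh; have := (hT _ hh).2.1; omega
  change sigF n e (ρ n) = e
  rw [r2 n hnT]; simp [sigF]

lemma sig_mul_mem' {T : Finset ℤ} {n e : ℤ} (hn : 0 < n) (he : e ≠ 0) (h1 : e < n) (h2 : -n < e)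
    (hT : ∀ i ∈ T, 0 < i ∧ i < n ∧ i ≠ |e|) (h : Function.Involutive (sigF n e))
    {π : Equiv.Perm ℤ} (hπ : π ∈ JS (insert n (insert |e| T))) (hne : π n = e) :
    sig n e h * π ∈ JS T := by
  obtain ⟨r1, r2, r3, r4⟩ := id hπ
  have hen : π e = n := by rw [← hne, r3]
  have hen' : π (-e) = -n := by rw [r1, hen]
  have hne' : π (-n) = -e := by rw [r1, hne]
  have hfix : ∀ a, |a| ∉ T → sigF n e (π a) = a := by
    intro a ha
    by_cases hs : |a| ∈ insert n (insert |e| T)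
    · simp only [Finset.mem_insert, ha, or_false] at hs
      have : a = n ∨ a = -n ∨ a = e ∨ a = -e := by
        rcases hs with hs | hs
        · rw [← abs_of_pos hn, abs_eq_abs] at hs; tauto
        · rw [abs_eq_abs] at hs; tauto
      rcases this with rfl | rfl | rfl | rfl
      · rw [hne]; unfold sigF; split_ifs <;> omega
      · rw [hne']; unfold sigF; split_ifs <;> omega
      · rw [hen]; unfold sigF; split_ifs <;> omega
      · rw [hen']; unfold sigF; split_ifs <;> omega
    · rw [r2 a hs]
      simp only [Finset.mem_insert, not_or] at hs
      exact sigF_off (by rw [abs_of_pos hn]; exact hs.1) hs.2.1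
  have hne1 : |n| ∉ T := fun hh => by
    rw [abs_of_pos hn] at hh; have := (hT _ hh).2.1; omega
  have hne2 : |e| ∉ T := fun hh => (hT _ hh).2.2 rfl
  have hT1 : ∀ a, |a| ∈ T → sigF n e (π a) = π a := by
    intro a ha
    apply sigF_off
    · intro hh
      rw [abs_eq_abs] at hh
      have : a = e ∨ a = -e := by
        rw [← r3 a]
        rcases hh with hh | hh
        · rw [hh, hne]; tauto
        · rw [hh, hne']; tauto
      rw [← abs_eq_abs] at this
      exact hne2 (this ▸ ha)
    · intro hh
      rw [abs_eq_abs] at hh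
      have : a = n ∨ a = -n := by
        rw [← r3 a]
        rcases hh with hh | hh
        · rw [hh, hen]; tauto
        · rw [hh, hen']; tauto
      rw [← abs_eq_abs] at this
      exact hne1 (this ▸ ha)
  have hTm : ∀ a, |a| ∈ T → |π a| ∈ T := by
    intro a ha
    by_contra hc
    have := hfix _ hc
    rw [r3] at this
    have h3 : sigF n e a = a := by
      apply sigF_off
      · intro hh; exact hne1 (hh ▸ ha)
      · intro hh; exact hne2 (hh ▸ ha)
    rw [h3] at this
    exact hc (this ▸ ha)
  refine ⟨?_, fun a ha => hfix a ha, ?_, ?_⟩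
  · intro a
    change sigF n e (π (-a)) = - sigF n e (π a)
    rw [r1, sigF_odd hn he h1 h2]
  · intro a
    change sigF n e (π (sigF n e (π a))) = a
    by_cases ha : |a| ∈ T
    · rw [hT1 a ha, hT1 _ (hTm a ha), r3]
    · rw [hfix a ha, hfix a ha]
  · intro i hi
    change sigF n e (π i) ≠ i ∧ sigF n e (π i) ≠ -i
    rw [hT1 i (by rwa [abs_of_pos (hT i hi).1])]
    exact r4 i (by simp [hi])

lemma dStat_insert (T : Finset ℤ) (n j : ℤ) (π : ℤ → ℤ) (hnj : n ≠ j) (hn : n ∉ T) (hj : j ∉ T) :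
    dStat (insert n (insert j T)) π = dStat T π +
      ∑ i ∈ T, (dTerm π i j + dTerm π j i + dTerm π i n + dTerm π n i) +
      (dTerm π j n + dTerm π n j) := by
  have h0 : ∀ i, dTerm π i i = 0 := fun i => by simp [dTerm]
  have h1 : n ∉ insert j T := by simp [hnj, hn]
  unfold dStat
  simp only [Finset.sum_insert h1, Finset.sum_insert hj, Finset.sum_add_distrib, h0]
  ring

set_option maxHeartbeats 1000000 in
lemma dStat_sig {T : Finset ℤ} {n e : ℤ} (hn : 0 < n) (he : e ≠ 0) (h1 : e < n) (h2 : -n < e)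
    (hT : ∀ i ∈ T, 0 < i ∧ i < n ∧ i ≠ |e|) (h : Function.Involutive (sigF n e))
    {ρ : Equiv.Perm ℤ} (hρ : ρ ∈ JS T) :
    dStat (insert n (insert |e| T)) (sig n e h * ρ : Equiv.Perm ℤ) = dStat T ρ + 
      (if 0 < e then 1 + 2 * (T.filter (fun i => e < i)).card
        else 1 + 2 * (T.filter (fun i => i < -e)).card + 2 * T.card) := by
  obtain ⟨r1, r2, r3, r4⟩ := id hρ
  have hnT : |n| ∉ T := fun hh => by
    rw [abs_of_pos hn] at hh; have := (hT _ hh).2.1; omega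
  have heT : |e| ∉ T := fun hh => (hT _ hh).2.2 rfl
  have habs : ∀ a, |a| ∈ T → |ρ a| < n ∧ |ρ a| ≠ |e| := fun a ha =>
    (hT _ (JS_abs_mem hρ ha)).2
  have key : ∀ i ∈ T, (sig n e h * ρ) i = ρ i := by
    intro a ha
    have ha' : |a| ∈ T := by rwa [abs_of_pos (hT a ha).1]
    have := JS_abs_mem hρ ha'
    exact sigF_off (fun hh => hnT (hh ▸ this)) (fun hh => heT (hh ▸ this))
  have hvn : (sig n e h * ρ) n = e := sig_mul_apply hn hT h hρ
  have hve : (sig n e h * ρ) e = n := by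
    change sigF n e (ρ e) = n
    rw [r2 e heT]; unfold sigF; split_ifs <;> omega
  have hvne : (sig n e h * ρ) (-e) = -n := by
    change sigF n e (ρ (-e)) = -n
    rw [r2 (-e) (by rwa [abs_neg])]; unfold sigF; split_ifs <;> omega
  generalize sig n e h * ρ = π at *
  have hd : dStat T π = dStat T ρ := by
    unfold dStat
    refine Finset.sum_congr rfl fun i hi => Finset.sum_congr rfl fun k hk => ?_
    simp only [dTerm, key i hi, key k hk]
  have hen : n ≠ |e| := by
    rcases abs_choice e with hh | hh <;> rw [hh] <;> omega
  rw [dStat_insert T n |e| π hen (by rwa [abs_of_pos hn] at hnT) heT, hd, add_assoc]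
  congr 1
  split_ifs with hpos
  · have hs : ∑ i ∈ T, (dTerm π i |e| + dTerm π |e| i + dTerm π i n + dTerm π n i)
        = ∑ i ∈ T, (if e < i then 1 else 0) + ∑ i ∈ T, (if e < |ρ i| then 1 else 0) := by
      rw [← Finset.sum_add_distrib]
      refine Finset.sum_congr rfl fun i hi => ?_
      have hi' := hT i hi
      have ha := habs i (by rwa [abs_of_pos hi'.1])
      rw [abs_of_pos hpos] at ha hi' ⊢
      have ha2 := abs_lt.1 ha.1
      have d1 : dTerm π i e = 0 := by
        simp only [dTerm, key i hi, hve]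
        rw [if_neg (by omega), if_neg (by omega)]
      have d2 : dTerm π e i = if e < i then 1 else 0 := by
        simp only [dTerm, key i hi, hve]
        split_ifs <;> omega
      have d3 : dTerm π i n = if e < |ρ i| then 1 else 0 := by
        simp only [dTerm, key i hi, hvn]
        rcases abs_cases (ρ i) with hh | hh <;> rw [hh.1] at ha ⊢ <;> split_ifs <;> omega
      have d4 : dTerm π n i = 0 := by
        unfold dTerm
        rw [if_neg (by omega), if_neg (by omega)]
      rw [d1, d2, d3, d4]
      omega
    rw [hs, JS_sum hρ (fun i hi => (hT i hi).1) (fun i => if e < i then 1 else 0),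
      ← Finset.card_filter, abs_of_pos hpos]
    simp only [dTerm, hvn, hve]
    split_ifs <;> omega
  · have hneg : e < 0 := by omega
    have hs : ∑ i ∈ T, (dTerm π i |e| + dTerm π |e| i + dTerm π i n + dTerm π n i)
        = ∑ i ∈ T, (if i < -e then 1 else 0) + ∑ i ∈ T, (if |ρ i| < -e then 1 else 0)
          + ∑ i ∈ T, 2 := by
      rw [← Finset.sum_add_distrib, ← Finset.sum_add_distrib]
      refine Finset.sum_congr rfl fun i hi => ?_
      have hi' := hT i hi
      have ha := habs i (by rwa [abs_of_pos hi'.1])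
      rw [abs_of_neg hneg] at ha hi' ⊢
      have ha2 := abs_lt.1 ha.1
      have d1 : dTerm π i (-e) + dTerm π (-e) i = (if i < -e then 1 else 0) + 1 := by
        simp only [dTerm, key i hi, hvne]
        split_ifs <;> omega
      have d3 : dTerm π i n = (if |ρ i| < -e then 1 else 0) + 1 := by
        simp only [dTerm, key i hi, hvn]
        rcases abs_cases (ρ i) with hh | hh <;> rw [hh.1] at ha ⊢ <;> split_ifs <;> omega
      have d4 : dTerm π n i = 0 := by
        unfold dTerm
        rw [if_neg (by omega), if_neg (by omega)]
      rw [d1, d3, d4]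
      omega
    rw [hs, JS_sum hρ (fun i hi => (hT i hi).1) (fun i => if i < -e then 1 else 0),
      ← Finset.card_filter, abs_of_neg hneg]
    simp only [dTerm, hvn, hvne, Finset.sum_const, smul_eq_mul]
    split_ifs <;> omega

lemma JS_finite (S : Finset ℤ) : (JS S).Finite := by
  set S' := S ∪ S.image (fun a => |a|) with hS'
  have hf : (Set.univ.pi (fun _ : S => {a : ℤ | |a| ∈ S'})).Finite := by
    apply Set.Finite.pi
    intro _
    refine (Finset.finite_toSet (S' ∪ S'.image (fun a => -a))).subset ?_
    intro a ha
    simp only [Set.mem_ofPred_eq] at ha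
    simp only [Finset.coe_union, Finset.coe_image, Set.mem_union, Finset.mem_coe, Set.mem_image]
    rcases abs_choice a with h | h <;> rw [h] at ha
    · exact Or.inl ha
    · exact Or.inr ⟨_, ha, neg_neg a⟩
  refine Set.Finite.of_finite_image (f := fun π (i : S) => π (i : ℤ)) (hf.subset ?_) ?_
  · rintro _ ⟨π, hπ, rfl⟩ i _
    obtain ⟨i, hi⟩ := i
    change |π i| ∈ S'
    rcases abs_choice i with h | h
    · exact Finset.mem_union_left _ (JS_abs_mem hπ (by rwa [h]))
    · by_cases hi' : |i| ∈ S
      · exact Finset.mem_union_left _ (JS_abs_mem hπ hi')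
      · rw [hπ.2.1 i hi']
        exact Finset.mem_union_right _ (Finset.mem_image_of_mem _ hi)
  · intro π hπ ρ hρ h
    ext a
    by_cases ha : |a| ∈ S
    · have := congrFun h ⟨|a|, ha⟩
      simp only at this
      rcases abs_choice a with h | h <;> rw [h] at this
      · exact this
      · rw [hπ.1, hρ.1] at this
        exact neg_injective this
    · rw [hπ.2.1 a ha, hρ.2.1 a ha]

/-- step factor -/
def Fp (m : ℕ) : ℚ[X] := ∑ t ∈ Finset.range (2 * m + 1), (X ^ t + X ^ (t + 2 * m))

/-- product of the step factors -/
def Qp : ℕ → ℚ[X]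
  | 0 => 1
  | m + 1 => Qp m * Fp m

lemma rank_above {M : Type*} [AddCommMonoid M] (S : Finset ℤ) : ∀ f : ℕ → M,
    ∑ j ∈ S, f ((S.filter (fun i => j < i)).card) = ∑ t ∈ Finset.range S.card, f t := by
  induction S using Finset.induction_on_max with
  | empty => simp
  | insert a s ha ih =>
    intro f
    have has : a ∉ s := fun h => lt_irrefl _ (ha a h)
    rw [Finset.sum_insert has, Finset.card_insert_of_notMem has, Finset.sum_range_succ',
      ← ih (fun t => f (t + 1)), add_comm]
    congr 1
    · refine Finset.sum_congr rfl fun j hj => ?_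
      rw [Finset.filter_insert, if_pos (ha j hj), Finset.card_insert_of_notMem (by simp [has])]
    · rw [Finset.filter_insert, if_neg (lt_irrefl a), Finset.filter_false_of_mem, Finset.card_empty]
      intro x hx
      exact not_lt.2 (ha x hx).le

lemma rank_below {M : Type*} [AddCommMonoid M] (S : Finset ℤ) (f : ℕ → M) :
    ∑ j ∈ S, f ((S.filter (fun i => i < j)).card) = ∑ t ∈ Finset.range S.card, f t := by
  induction S using Finset.induction_on_max with
  | empty => simp
  | insert a s ha ih =>
    have has : a ∉ s := fun h => lt_irrefl _ (ha a h)
    rw [Finset.sum_insert has, Finset.card_insert_of_notMem has, Finset.sum_range_succ,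
      ← ih, add_comm]
    congr 1
    · refine Finset.sum_congr rfl fun j hj => ?_
      rw [Finset.filter_insert, if_neg (not_lt.2 (ha j hj).le)]
    · rw [Finset.filter_insert, if_neg (lt_irrefl a), Finset.filter_true_of_mem ha]

lemma filter_erase_self (S : Finset ℤ) (j : ℤ) (p : ℤ → Prop) [DecidablePred p] (h : ¬ p j) :
    (S.erase j).filter p = S.filter p := by
  ext x
  simp only [Finset.mem_filter, Finset.mem_erase]
  constructor
  · tauto
  · rintro ⟨h1, h2⟩
    exact ⟨⟨fun hh => h (hh ▸ h2), h1⟩, h2⟩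

lemma fiber_sum {T : Finset ℤ} {n e : ℤ} (hn : 0 < n) (he : e ≠ 0) (h1 : e < n) (h2 : -n < e)
    (hT : ∀ i ∈ T, 0 < i ∧ i < n ∧ i ≠ |e|) :
    ∑ π ∈ (JS_finite (insert n (insert |e| T))).toFinset.filter (fun π => π n = e),
      (X : ℚ[X]) ^ dStat (insert n (insert |e| T)) π =
    (∑ π ∈ (JS_finite T).toFinset, X ^ dStat T π) *
      X ^ (if 0 < e then 1 + 2 * (T.filter (fun i => e < i)).card
        else 1 + 2 * (T.filter (fun i => i < -e)).card + 2 * T.card) := by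
  have h := sigF_invol hn he h1 h2
  have hss : ∀ π : Equiv.Perm ℤ, sig n e h * (sig n e h * π) = π := by
    intro π; ext a; exact h _
  rw [Finset.sum_mul]
  symm
  refine Finset.sum_nbij' (fun π => sig n e h * π) (fun π => sig n e h * π) ?_ ?_ ?_ ?_ ?_
  · intro π hπ
    rw [Set.Finite.mem_toFinset] at hπ
    rw [Finset.mem_filter, Set.Finite.mem_toFinset]
    exact ⟨sig_mul_mem hn he h1 h2 hT h hπ, sig_mul_apply hn hT h hπ⟩
  · intro π hπ
    rw [Finset.mem_filter, Set.Finite.mem_toFinset] at hπ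
    rw [Set.Finite.mem_toFinset]
    exact sig_mul_mem' hn he h1 h2 hT h hπ.1 hπ.2
  · intro π _; exact hss π
  · intro π _; exact hss π
  · intro π hπ
    rw [Set.Finite.mem_toFinset] at hπ
    rw [dStat_sig hn he h1 h2 hT h hπ, pow_add]

lemma main_sum (m : ℕ) : ∀ S : Finset ℤ, S.card = 2 * m → (∀ i ∈ S, 0 < i) →
    ∑ π ∈ (JS_finite S).toFinset, (X : ℚ[X]) ^ dStat S π = X ^ m * expand ℚ 2 (Qp m) := by
  induction m with
  | zero =>
    intro S hS _
    have hS0 : S = ∅ := by simpa using hS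
    subst hS0
    have : (JS_finite ∅).toFinset = {1} := by
      ext π
      rw [Set.Finite.mem_toFinset, Finset.mem_singleton]
      constructor
      · rintro ⟨-, h, -, -⟩
        ext a
        simpa using h a
      · rintro rfl
        refine ⟨?_, ?_, ?_, ?_⟩ <;> simp
    rw [this]
    simp [dStat, Qp]
  | succ m ih =>
    intro S hS hpos
    have hne : S.Nonempty := by rw [← Finset.card_pos]; omega
    obtain ⟨n, hnS, hmax⟩ : ∃ n ∈ S, ∀ i ∈ S, i ≤ n :=
      ⟨S.max' hne, S.max'_mem hne, fun i hi => S.le_max' i hi⟩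
    have hn := hpos n hnS
    set S' := S.erase n with hS'
    have hcard : S'.card = 2 * m + 1 := by rw [Finset.card_erase_of_mem hnS]; omega
    have hS'p : ∀ j ∈ S', 0 < j ∧ j < n := by
      intro j hj
      rw [hS', Finset.mem_erase] at hj
      have := hmax j hj.2
      exact ⟨hpos j hj.2, lt_of_le_of_ne this hj.1⟩
    have hfib : ∀ e : ℤ, |e| ∈ S' →
        ∑ π ∈ (JS_finite S).toFinset.filter (fun π => π n = e), (X : ℚ[X]) ^ dStat S π =
        (X ^ m * expand ℚ 2 (Qp m)) * X ^ (if 0 < e then 1 + 2 * (S'.filter (fun i => e < i)).card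
        else 1 + 2 * (S'.filter (fun i => i < -e)).card + 2 * (2 * m)) := by
      intro e heS
      have hTc : (S'.erase |e|).card = 2 * m := by rw [Finset.card_erase_of_mem heS]; omega
      have hS2 : insert n (insert |e| (S'.erase |e|)) = S := by
        rw [Finset.insert_erase heS, Finset.insert_erase hnS]
      have hep := hS'p _ heS
      have he0 : e ≠ 0 := abs_pos.1 hep.1
      have hlt := abs_lt.1 hep.2
      have := fiber_sum (T := S'.erase |e|) (n := n) (e := e) hn he0 hlt.2 hlt.1 (by
        intro i hi
        rw [Finset.mem_erase] at hi
        exact ⟨(hS'p i hi.2).1, (hS'p i hi.2).2, hi.1⟩)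
      simp only [hS2] at this
      rw [this, ih _ hTc (fun i hi => (hS'p i (Finset.mem_of_mem_erase hi)).1), hTc]
      congr 2
      split_ifs with hp
      · rw [filter_erase_self]
        rw [abs_of_pos hp]; exact lt_irrefl _
      · rw [filter_erase_self]
        rw [abs_of_neg (by omega)]; exact lt_irrefl _
    have hmaps : ∀ π ∈ (JS_finite S).toFinset, π n ∈ S' ∪ S'.image (fun a => -a) := by
      intro π hπ
      rw [Set.Finite.mem_toFinset] at hπ
      have h1 := JS_abs_mem hπ (i := n) (by rwa [abs_of_pos hn])
      have h2 := hπ.2.2.2 n hnS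
      have h3 : |π n| ∈ S' := by
        rw [hS', Finset.mem_erase]
        refine ⟨?_, h1⟩
        rcases abs_choice (π n) with h | h <;> rw [h] <;> omega
      rw [Finset.mem_union, Finset.mem_image]
      rcases abs_choice (π n) with h | h <;> rw [h] at h3
      · exact Or.inl h3
      · exact Or.inr ⟨_, h3, neg_neg _⟩
    rw [← Finset.sum_fiberwise_of_maps_to hmaps, Finset.sum_union, Finset.sum_image]
    · have e1 : ∀ j ∈ S', ∑ π ∈ (JS_finite S).toFinset.filter (fun π => π n = j),
          (X : ℚ[X]) ^ dStat S π = (X ^ m * expand ℚ 2 (Qp m)) *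
            X ^ (1 + 2 * (S'.filter (fun i => j < i)).card) := by
        intro j hj
        have := (hS'p j hj).1
        rw [hfib j (by rwa [abs_of_pos this]), if_pos this]
      have e2 : ∀ j ∈ S', ∑ π ∈ (JS_finite S).toFinset.filter (fun π => π n = -j),
          (X : ℚ[X]) ^ dStat S π = (X ^ m * expand ℚ 2 (Qp m)) *
            X ^ (1 + 2 * (S'.filter (fun i => i < j)).card + 2 * (2 * m)) := by
        intro j hj
        have := (hS'p j hj).1
        rw [hfib (-j) (by rwa [abs_neg, abs_of_pos this]), if_neg (by omega), neg_neg]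
      rw [Finset.sum_congr rfl e1, Finset.sum_congr rfl e2, ← Finset.mul_sum, ← Finset.mul_sum,
        rank_above S' (fun t => (X : ℚ[X]) ^ (1 + 2 * t)),
        rank_below S' (fun t => (X : ℚ[X]) ^ (1 + 2 * t + 2 * (2 * m))), hcard, ← mul_add,
        ← Finset.sum_add_distrib]
      simp only [Qp, Fp, map_mul, map_sum, map_add, map_pow, expand_X]
      rw [pow_succ, mul_assoc, mul_assoc]
      congr 1
      rw [mul_left_comm X]
      congr 1
      rw [Finset.mul_sum]
      refine Finset.sum_congr rfl fun t _ => ?_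
      ring
    · intro a _ b _ h
      exact neg_injective h
    · rw [Finset.disjoint_left]
      intro a ha hb
      obtain ⟨b, hb', rfl⟩ := Finset.mem_image.1 hb
      have := hS'p _ ha
      have := hS'p _ hb'
      omega

lemma JDPoly_eq (m : ℕ) : JDPoly (2 * m) = X ^ m * expand ℚ 2 (Qp m) := by
  unfold JDPoly
  rw [JD_eq, finsum_mem_eq_finite_toFinset_sum _ (JS_finite _),
    ← main_sum m (Finset.Icc 1 ((2 * m : ℕ) : ℤ)) (by rw [Int.card_Icc]; omega) (fun i hi => by
      have := Finset.mem_Icc.1 hi; omega)]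
  exact Finset.sum_congr rfl fun π _ => by rw [invDStat_eq]

/-- symmetric unimodal about `c/2` -/
def SU (c : ℤ) (a : ℤ → ℚ) : Prop := ∀ i j : ℤ, |2 * j - c| ≤ |2 * i - c| → a i ≤ a j

lemma SU_of_step {c : ℤ} {b : ℤ → ℚ} (hs : ∀ i, b (c - i) = b i)
    (hm : ∀ i, 2 * i + 1 ≤ c → b i ≤ b (i + 1)) : SU c b := by
  have mono : ∀ i j, i ≤ j → 2 * j ≤ c → b i ≤ b j := by
    intro i j hij
    induction j, hij using Int.leInduction with
    | base => intro _; exact le_rfl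
    | succ k hk ih => intro h; exact (ih (by omega)).trans (hm k (by omega))
  intro i j hij
  have red : ∀ i, ∃ i', 2 * i' ≤ c ∧ b i' = b i ∧ |2 * i - c| = c - 2 * i' := by
    intro i
    rcases le_total (2 * i) c with h | h
    · exact ⟨i, h, rfl, by rw [abs_of_nonpos (by omega)]; omega⟩
    · exact ⟨c - i, by omega, hs i, by rw [abs_of_nonneg (by omega)]; omega⟩
  obtain ⟨i', h1, h2, h3⟩ := red i
  obtain ⟨j', h4, h5, h6⟩ := red j
  rw [← h2, ← h5]
  exact mono _ _ (by omega) h4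

/-- coefficients indexed by integers -/
def cf (p : ℚ[X]) (i : ℤ) : ℚ := if 0 ≤ i then p.coeff i.toNat else 0

lemma cf_add (p q : ℚ[X]) (i : ℤ) : cf (p + q) i = cf p i + cf q i := by
  unfold cf; split_ifs <;> simp

lemma cf_sum {ι : Type*} (s : Finset ι) (f : ι → ℚ[X]) (i : ℤ) :
    cf (∑ t ∈ s, f t) i = ∑ t ∈ s, cf (f t) i := by
  unfold cf; split_ifs <;> simp

lemma cf_mul_X_pow (p : ℚ[X]) (t : ℕ) (i : ℤ) : cf (p * X ^ t) i = cf p (i - t) := by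
  unfold cf
  rw [coeff_mul_X_pow']
  split_ifs <;> first | rfl | omega | (congr 1; omega)

lemma cf_nat (p : ℚ[X]) (i : ℕ) : cf p i = p.coeff i := by simp [cf]

lemma SU_step (m : ℕ) (c : ℤ) (p : ℚ[X]) (h : SU c (cf p)) : SU (c + 4 * m) (cf (p * Fp m)) := by
  have hsym : ∀ i, cf p (c - i) = cf p i := fun i => by
    have : |2 * (c - i) - c| = |2 * i - c| := by rw [← abs_neg]; congr 1; ring
    exact le_antisymm (h _ _ this.ge) (h _ _ this.le)
  have hb : ∀ i, cf (p * Fp m) i =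
      ∑ t ∈ Finset.range (2 * m + 1), (cf p (i - t) + cf p (i - t - 2 * m)) := by
    intro i
    unfold Fp
    rw [Finset.mul_sum, cf_sum]
    refine Finset.sum_congr rfl fun t _ => ?_
    rw [mul_add, cf_add, cf_mul_X_pow, cf_mul_X_pow]
    congr 2
    push_cast; ring
  apply SU_of_step
  · intro i
    rw [hb, hb, ← Finset.sum_range_reflect]
    refine Finset.sum_congr rfl fun t ht => ?_
    have ht := Finset.mem_range.1 ht
    have hc : ((2 * m + 1 - 1 - t : ℕ) : ℤ) = 2 * m - t := by omega
    rw [hc, ← hsym (i - t), ← hsym (i - t - 2 * m), add_comm]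
    congr 2 <;> ring
  · intro i hi
    have tel : ∀ (x : ℤ) (N : ℕ), ∑ t ∈ Finset.range N, (cf p (x + 1 - t) - cf p (x - t))
        = cf p (x + 1) - cf p (x + 1 - N) := by
      intro x N
      induction N with
      | zero => simp
      | succ N ih =>
        rw [Finset.sum_range_succ, ih]
        have : x + 1 - ((N + 1 : ℕ) : ℤ) = x - N := by push_cast; ring
        rw [this]; ring
    have t1 := tel i (2 * m + 1)
    have t2 := tel (i - 2 * m) (2 * m + 1)
    have hd : cf (p * Fp m) (i + 1) - cf (p * Fp m) i =
        (cf p (i + 1) - cf p (i + 1 - (2 * m + 1 : ℕ))) +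
        (cf p (i - 2 * m + 1) - cf p (i - 2 * m + 1 - (2 * m + 1 : ℕ))) := by
      rw [← t1, ← t2, hb, hb, ← Finset.sum_sub_distrib, ← Finset.sum_add_distrib]
      refine Finset.sum_congr rfl fun t _ => ?_
      have a1 : i + 1 - (t : ℤ) - 2 * m = i - 2 * m + 1 - t := by ring
      have a2 : i - (t : ℤ) - 2 * m = i - 2 * m - t := by ring
      rw [a1, a2]; ring
    have u1 : cf p (i - 2 * m + 1 - (2 * m + 1 : ℕ)) ≤ cf p (i + 1) := by
      apply h
      push_cast
      rw [abs_le]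
      rcases abs_cases (2 * (i - 2 * (m : ℤ) + 1 - (2 * m + 1)) - c) with hh | hh <;> rw [hh.1] <;> constructor <;> omega
    have u2 : cf p (i + 1 - (2 * m + 1 : ℕ)) ≤ cf p (i - 2 * m + 1) := by
      apply h
      push_cast
      rw [abs_le]
      rcases abs_cases (2 * (i + 1 - (2 * (m : ℤ) + 1)) - c) with hh | hh <;> rw [hh.1] <;> constructor <;> omega
    linarith

lemma SU_Qp (m : ℕ) : SU (2 * m * (m - 1)) (cf (Qp m)) := by
  induction m with
  | zero =>
    intro i j hij
    have hq : ∀ x, cf (Qp 0) x = if x = 0 then 1 else 0 := by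
      intro x
      simp only [cf, Qp, coeff_one]
      split_ifs <;> first | rfl | omega
    rw [hq, hq]
    simp only [Nat.cast_zero, mul_zero, zero_mul, sub_zero] at hij
    by_cases hi : i = 0
    · subst hi
      have : j = 0 := by
        rw [mul_zero, abs_zero] at hij
        have := abs_nonpos_iff.1 hij
        omega
      simp [this]
    · rw [if_neg hi]; split_ifs <;> norm_num
  | succ m ih =>
    have := SU_step m _ _ ih
    have hc : (2 * ((m + 1 : ℕ) : ℤ) * (((m + 1 : ℕ) : ℤ) - 1)) = 2 * m * (m - 1) + 4 * m := by
      push_cast; ring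
    rw [hc]
    exact this

lemma Qp_coeff_zero (m : ℕ) : (Qp m).coeff 0 ≠ 0 := by
  induction m with
  | zero => simp [Qp]
  | succ m ih =>
    rw [Qp, mul_coeff_zero]
    refine mul_ne_zero ih ?_
    rw [coeff_zero_eq_eval_zero, Fp, eval_finsetSum]
    apply ne_of_gt
    refine Finset.sum_pos' (fun t _ => ?_) ⟨0, by simp, ?_⟩
    · simp only [eval_add, eval_pow, eval_X]; positivity
    · simp only [eval_add, eval_pow, eval_X, pow_zero, eval_one]; exact add_pos_of_pos_of_nonneg one_pos (by positivity)

lemma Qp_facts (m : ℕ) : ∃ d : ℕ, (Qp m).natDegree = 2 * d ∧ SU (2 * d : ℕ) (cf (Qp m)) := by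
  have h := SU_Qp m
  obtain ⟨d, hd⟩ : ∃ d : ℕ, (2 * m * (m - 1) : ℤ) = (2 * d : ℕ) := by
    refine ⟨m * (m - 1), ?_⟩
    rcases m with _ | m
    · simp
    · rw [Nat.add_sub_cancel]; push_cast; ring
  rw [hd] at h
  refine ⟨d, ?_, h⟩
  have hsym : ∀ i, cf (Qp m) ((2 * d : ℕ) - i) = cf (Qp m) i := fun i => by
    have : |2 * ((2 * d : ℕ) - i) - (2 * d : ℕ)| = |2 * i - (2 * d : ℕ)| := by
      rw [← abs_neg]; congr 1; ring
    exact le_antisymm (h _ _ this.ge) (h _ _ this.le)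
  apply le_antisymm
  · rw [natDegree_le_iff_coeff_eq_zero]
    intro N hN
    rw [← cf_nat, ← hsym]
    unfold cf
    rw [if_neg (by omega)]
  · apply le_natDegree_of_ne_zero
    rw [← cf_nat, ← hsym, sub_self]
    simpa [cf] using Qp_coeff_zero m

theorem typeD_fpf_involution_inversion_symmetric_unimodal (n : ℕ) (h2 : 2 ≤ n)
    (he : Even n) :
    (∀ k : ℕ, ¬ k % 2 = (n / 2) % 2 → (JDPoly n).coeff k = 0) ∧
    (∀ k : ℕ, k ≤ n / 2 + (JDPoly n).natDegree →
      (JDPoly n).coeff k = (JDPoly n).coeff (n / 2 + (JDPoly n).natDegree - k)) ∧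
    (∃ t : ℕ,
      (∀ i j : ℕ, i ≤ j → j ≤ t →
        (JDPoly n).coeff (n / 2 + 2 * i) ≤ (JDPoly n).coeff (n / 2 + 2 * j)) ∧
      (∀ i j : ℕ, t ≤ i → i ≤ j →
        (JDPoly n).coeff (n / 2 + 2 * j) ≤ (JDPoly n).coeff (n / 2 + 2 * i))) := by
  obtain ⟨m, hm⟩ := he
  obtain rfl : n = 2 * m := by omega
  have hm2 : 2 * m / 2 = m := by omega
  obtain ⟨d, hdeg, hsu⟩ := Qp_facts m
  have hcoeff : ∀ k, (JDPoly (2 * m)).coeff k =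
      if m ≤ k ∧ 2 ∣ (k - m) then (Qp m).coeff ((k - m) / 2) else 0 := by
    intro k
    rw [JDPoly_eq, mul_comm, coeff_mul_X_pow', coeff_expand (by norm_num)]
    split_ifs <;> first | rfl | omega
  have hco : ∀ i, (JDPoly (2 * m)).coeff (m + 2 * i) = cf (Qp m) i := by
    intro i
    rw [hcoeff, if_pos (by omega), cf_nat]
    congr 1; omega
  have hnd : (JDPoly (2 * m)).natDegree = m + 2 * (2 * d) := by
    have hQ : Qp m ≠ 0 := fun h => Qp_coeff_zero m (by simp [h])
    rw [JDPoly_eq, natDegree_mul (by simp) ((expand_ne_zero (by norm_num)).2 hQ), natDegree_X_pow,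
      natDegree_expand, hdeg]
    ring
  have hsym : ∀ i, cf (Qp m) ((2 * d : ℕ) - i) = cf (Qp m) i := fun i => by
    have : |2 * ((2 * d : ℕ) - i) - (2 * d : ℕ)| = |2 * i - (2 * d : ℕ)| := by
      rw [← abs_neg]; congr 1; ring
    exact le_antisymm (hsu _ _ this.ge) (hsu _ _ this.le)
  rw [hm2, hnd]
  refine ⟨?_, ?_, d, ?_, ?_⟩
  · intro k hk
    rw [hcoeff, if_neg (by omega)]
  · intro k hk
    by_cases hpar : k % 2 = m % 2
    · by_cases h1 : m ≤ k
      · obtain ⟨i, rfl⟩ : ∃ i, k = m + 2 * i := ⟨(k - m) / 2, by omega⟩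
        by_cases h3 : i ≤ 2 * d
        · have : m + (m + 2 * (2 * d)) - (m + 2 * i) = m + 2 * (2 * d - i) := by omega
          rw [this, hco, hco, ← hsym, Nat.cast_sub h3]
        · rw [hco, ← hsym, hcoeff, if_neg (by omega)]
          unfold cf
          rw [if_neg (by omega)]
      · rw [hcoeff, if_neg (by omega)]
        obtain ⟨i, hi⟩ : ∃ i, m + (m + 2 * (2 * d)) - k = m + 2 * i :=
          ⟨(m + 2 * (2 * d) - k) / 2, by omega⟩
        rw [hi, hco, ← hsym]
        unfold cf
        rw [if_neg (by omega)]
    · rw [hcoeff, hcoeff, if_neg (by omega), if_neg (by omega)]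
  · intro i j hij hj
    rw [hco, hco]
    apply hsu
    rw [abs_of_nonpos (by omega), abs_of_nonpos (by omega)]
    omega
  · intro i j hi hij
    rw [hco, hco]
    apply hsu
    rw [abs_of_nonneg (by omega), abs_of_nonneg (by omega)]
    omega
end
end
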